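/- Let F be a field with more than two elements, let R be a unital associative F-algebra, and let f be an element of the free associative F-algebra F⟨X⟩ such that f(R) is fully noncentral, i.e. the two-sided ideal of R generated by the set {f(a₁,…,a_m)·r − r·f(a₁,…,a_m) : a_i, r ∈ R} equals R. Then for every maximal two-sided ideal M of R, every element of R can be written as s + m, where s belongs to the additive subgroup of R generated by products of two values of f (that is, elements f(a₁,…,a_m)·f(b₁,…,b_m)) and m ∈ M. -/

import Mathlib

/-!
Let `S = R ⧸ M`, a simple ring on which `f` takes a noncentral value, and let `T` be the additive
span of the values of `f` in `S`; one has to show that `T * T = S`. Linearization yields a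
multilinear polynomial `g`, with nonzero coefficient at the identity permutation, whose values lie
in `T`. If two values of `g` do not commute, they generate a noncommutative Lie ideal inside `T`
and a theorem of Herstein applies. Otherwise `g` has commuting values, which by a staircase argument
makes `S` artinian, so that `S` is a matrix ring over a division ring `D`.

For matrices of size at least two, conjugating by transvections and by `diag(l, 1, …, 1)` with
`l ∈ F` different from `0` and `1` produces all the off-diagonal matrix units in `T`. For `S = D`,
the same staircase argument, run with `D[X]` acting on `D`, shows that `D` is algebraic over its
center `Z`. If `Z` is finite, then `D` is commutative by a theorem of Jacobson, which is impossible.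
If `Z` is infinite, a minimal curve among `z ↦ f(z a)` and its relatives is a monomial `z ^ m • v`
with `v` noncentral, and partial fractions show that the vectors `v` arising in this way form a
noncommutative Lie ideal.
-/

section LieIdeals

attribute [local instance] LieRing.ofAssociativeRing

variable {k S : Type*} [CommRing k] [Ring S] [Algebra k S]

/-- The square `L * L` of a Lie ideal of an associative algebra, as a Lie ideal. -/
def lieIdealSquare (L : LieIdeal k S) : LieIdeal k S where
  __ := L.toSubmodule * L.toSubmodule
  lie_mem {x p} hp := by
    change ⁅x, p⁆ ∈ L.toSubmodule * L.toSubmodule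
    induction hp using Submodule.mul_induction_on' with
    | mem_mul_mem a ha b hb =>
      have leibniz : ⁅x, a * b⁆ = ⁅x, a⁆ * b + a * ⁅x, b⁆ := by
        simp only [Ring.lie_def]; noncomm_ring
      rw [leibniz]
      exact add_mem (Submodule.mul_mem_mul (L.lie_mem ha) hb)
        (Submodule.mul_mem_mul ha (L.lie_mem hb))
    | add p _ q _ hp hq => rw [lie_add]; exact add_mem hp hq

theorem mul_mem_lieIdealSquare {L : LieIdeal k S} {a b : S} (ha : a ∈ L) (hb : b ∈ L) :
    a * b ∈ lieIdealSquare L :=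
  Submodule.mul_mem_mul ha hb

theorem lie_mul_eq_lie_sub_mul_lie (a b y : S) : ⁅a, b⁆ * y = ⁅a, b * y⁆ - b * ⁅a, y⁆ := by
  simp only [Ring.lie_def]; noncomm_ring

variable [IsSimpleRing S]

theorem submodule_eq_top_of_mul_mul_mem (U : Submodule k S) {c : S} (hc : c ≠ 0)
    (hU : ∀ x y, x * c * y ∈ U) : U = ⊤ := by
  have span_eq_top : TwoSidedIdeal.span {c} = ⊤ :=
    (eq_bot_or_eq_top _).resolve_left fun h ↦ hc <| by
      simpa [h] using TwoSidedIdeal.subset_span (Set.mem_singleton c)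
  refine eq_top_iff.2 fun s _ ↦ ?_
  have hs : s ∈ TwoSidedIdeal.span {c} := span_eq_top ▸ trivial
  rw [TwoSidedIdeal.mem_span_iff_mem_addSubgroup_closure] at hs
  refine (AddSubgroup.closure_le (K := U.toAddSubgroup)).2 ?_ hs
  rintro _ ⟨_, ⟨x, _, _, rfl, rfl⟩, y, _, rfl⟩
  exact hU x y

theorem lieIdeal_eq_top_of_mul_mem (U : LieIdeal k S) {c : S} (hc : c ≠ 0)
    (hU : ∀ y, c * y ∈ U) : U = ⊤ := by
  refine (LieSubmodule.toSubmodule_inj _ _).1 (submodule_eq_top_of_mul_mul_mem _ hc fun x y ↦ ?_)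
  have h : x * c * y = c * (y * x) + ⁅x, c * y⁆ := by rw [Ring.lie_def]; noncomm_ring
  exact h ▸ add_mem (hU (y * x)) (U.lie_mem (hU y))

theorem lieIdealSquare_eq_top {L : LieIdeal k S} {a b : S} (ha : a ∈ L) (hb : b ∈ L)
    (hab : ¬Commute a b) : lieIdealSquare L = ⊤ := by
  have hc : ⁅a, b⁆ ≠ 0 := fun h ↦ hab (commute_iff_lie_eq.2 h)
  have decompose (s : S) : ∃ l ∈ L, ∃ p ∈ lieIdealSquare L, l + p = s := by
    refine (LieSubmodule.mem_sup L (lieIdealSquare L) s).1 ?_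
    rw [lieIdeal_eq_top_of_mul_mem (L ⊔ lieIdealSquare L) hc fun y ↦ ?_]
    · trivial
    · rw [lie_mul_eq_lie_sub_mul_lie]
      exact sub_mem (le_sup_left (a := L) (lie_mem_left k S L _ _ ha))
        (le_sup_right (a := L) (mul_mem_lieIdealSquare hb (lie_mem_left k S L _ _ ha)))
  have lie_mem_square (s x : S) : ⁅s, x⁆ ∈ lieIdealSquare L := by
    obtain ⟨l, hl, p, hp, rfl⟩ := decompose s
    obtain ⟨m, hm, q, hq, rfl⟩ := decompose x
    have h : ⁅l + p, m + q⁆ = l * m - m * l + ⁅l, q⁆ + ⁅p, m + q⁆ := by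
      simp only [Ring.lie_def]; noncomm_ring
    rw [h]
    exact add_mem (add_mem (sub_mem (mul_mem_lieIdealSquare hl hm) (mul_mem_lieIdealSquare hm hl))
      (LieSubmodule.lie_mem _ hq)) (lie_mem_left k S _ _ _ hp)
  refine lieIdeal_eq_top_of_mul_mem _ hc fun y ↦ ?_
  rw [lie_mul_eq_lie_sub_mul_lie]
  exact sub_mem (lie_mem_square _ _) (mul_mem_lieIdealSquare hb (lie_mem_left k S L _ _ ha))

end LieIdeals

section InnerAut

variable (k : Type*) {A : Type*} [CommRing k] [Ring A] [Algebra k A]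

/-- Conjugation `a ↦ u a u⁻¹` by a unit `u`, as an automorphism of a `k`-algebra. -/
def innerAut (u : Aˣ) : A ≃ₐ[k] A :=
  MulSemiringAction.toAlgEquiv k A (ConjAct.toConjAct u)

theorem innerAut_apply (u : Aˣ) (a : A) : innerAut k u a = u * a * ↑u⁻¹ := rfl

variable {k}

/-- Invariance of a submodule of an algebra under all inner automorphisms. The additive span of the
values of a polynomial has this property. -/
def IsInnerInvariant (T : Submodule k A) : Prop :=
  ∀ (u : Aˣ), ∀ t ∈ T, u * t * ↑u⁻¹ ∈ T

theorem IsInnerInvariant.mul_sub_mul_sub_mul_mul_mem {T : Submodule k A}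
    (hT : IsInnerInvariant T) {n t : A} (hn : n * n = 0) (ht : t ∈ T) :
    n * t - t * n - n * t * n ∈ T := by
  let u : Aˣ := ⟨1 + n, 1 - n, by noncomm_ring; simp [hn], by noncomm_ring; simp [hn]⟩
  have h : n * t - t * n - n * t * n = (1 + n) * t * (1 - n) - t := by noncomm_ring
  exact h ▸ sub_mem (hT u t ht) ht

end InnerAut

section CartanBrauerHua

variable {D : Type*} [DivisionRing D]

/- Hua's identity: for `c₁ = x c x⁻¹` and `c₂ = (1 + x) c (1 + x)⁻¹` one has `(c₂ - c₁) x = c - c₂`,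
so that `x` lies in `K` unless `c = c₁ = c₂`. -/
theorem commute_of_mem_of_notMem {K : Subring D} (hinv : ∀ c ∈ K, c⁻¹ ∈ K)
    (hconj : ∀ u : Dˣ, ∀ c ∈ K, u * c * ↑u⁻¹ ∈ K) {c x : D} (hc : c ∈ K) (hx : x ∉ K) :
    Commute c x := by
  have hx₀ : x ≠ 0 := fun h ↦ hx (h ▸ K.zero_mem)
  have hx₁ : 1 + x ≠ 0 := fun h ↦ hx <| by
    rw [eq_neg_of_add_eq_zero_right h]; exact neg_mem K.one_mem
  set c₁ := x * c * x⁻¹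
  set c₂ := (1 + x) * c * (1 + x)⁻¹
  have h₁ : c₁ * x = x * c := inv_mul_cancel_right₀ hx₀ _
  have h₂ : c₂ * (1 + x) = (1 + x) * c := inv_mul_cancel_right₀ hx₁ _
  have hua : (c₂ - c₁) * x = c - c₂ := by
    have : c₂ * x = (1 + x) * c - c₂ := by rw [← h₂]; noncomm_ring
    rw [sub_mul, this, h₁]; noncomm_ring
  by_cases h : c₂ - c₁ = 0
  · have hcc₁ : c = c₁ := by
      rw [h, zero_mul] at hua
      rw [sub_eq_zero.1 hua.symm, sub_eq_zero.1 h]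
    rw [← hcc₁] at h₁
    exact h₁
  · have hc₁K : c₁ ∈ K := hconj (Units.mk0 x hx₀) c hc
    have hc₂K : c₂ ∈ K := hconj (Units.mk0 _ hx₁) c hc
    refine absurd ?_ hx
    rw [← inv_mul_cancel_left₀ h x, hua]
    exact mul_mem (hinv _ (sub_mem hc₂K hc₁K)) (sub_mem hc hc₂K)

theorem cartan_brauer_hua {K : Subring D} (hinv : ∀ c ∈ K, c⁻¹ ∈ K)
    (hconj : ∀ u : Dˣ, ∀ c ∈ K, u * c * ↑u⁻¹ ∈ K) : K = ⊤ ∨ K ≤ Subring.center D := by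
  refine or_iff_not_imp_left.2 fun hK c hc ↦ Subring.mem_center_iff.2 fun x ↦ ?_
  obtain ⟨y, hy⟩ : ∃ y, y ∉ K := by
    by_contra! h
    exact hK (eq_top_iff.2 fun y _ ↦ h y)
  by_cases hx : x ∈ K
  · have hxy : x + y ∉ K := fun h ↦ hy ((add_mem_cancel_left hx).1 h)
    have := (commute_of_mem_of_notMem hinv hconj hc hxy).sub_right
      (commute_of_mem_of_notMem hinv hconj hc hy)
    rw [add_sub_cancel_right] at this
    exact this.symm
  · exact (commute_of_mem_of_notMem hinv hconj hc hx).symm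

theorem mem_center_or_mem_center_of_commute_conj {a b : D}
    (h : ∀ u : Dˣ, Commute a (u * b * ↑u⁻¹)) :
    a ∈ Subring.center D ∨ b ∈ Subring.center D := by
  let K : Subring D := Subring.centralizer (Set.range fun u : Dˣ ↦ u * b * ↑u⁻¹)
  have hK {c : D} : c ∈ K ↔ ∀ u : Dˣ, Commute c (u * b * ↑u⁻¹) := by
    simp only [K, Subring.mem_centralizer_iff, Set.forall_mem_range, commute_iff_eq, eq_comm]
  have hinv (c : D) (hc : c ∈ K) : c⁻¹ ∈ K := hK.2 fun u ↦ (hK.1 hc u).inv_left₀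
  have hconj (w : Dˣ) (c : D) (hc : c ∈ K) : w * c * ↑w⁻¹ ∈ K := hK.2 fun u ↦ by
    simpa [innerAut_apply, mul_assoc] using (hK.1 hc (w⁻¹ * u)).map (innerAut ℤ w)
  rcases cartan_brauer_hua hinv hconj with hK_top | hK_center
  · refine .inr (Subring.mem_center_iff.2 fun x ↦ ?_)
    simpa using (hK.1 (hK_top ▸ Subring.mem_top x) 1).eq
  · exact .inl (hK_center (hK.2 h))

theorem IsInnerInvariant.exists_not_commute {k : Type*} [CommRing k] [Algebra k D]
    {T : Submodule k D} (hT : IsInnerInvariant T) {a : D} (ha : a ∈ T)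
    (hac : a ∉ Subring.center D) : ∃ b ∈ T, ¬Commute a b := by
  by_contra! h
  exact (mem_center_or_mem_center_of_commute_conj fun u ↦ h _ (hT u a ha)).elim hac hac

end CartanBrauerHua

section Linearization

variable {F X A : Type*} [CommRing F] [Ring A] [Algebra F A] {d : ℕ}

/-- The multilinear noncommutative polynomial `∑ σ, c σ • X_{σ 0} ⋯ X_{σ (d - 1)}`, as a multilinear
map on an algebra. -/
def permPolynomial (A : Type*) [Ring A] [Algebra F A] (c : Equiv.Perm (Fin d) → F) :
    MultilinearMap F (fun _ : Fin d ↦ A) A :=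
  ∑ σ, c σ • (MultilinearMap.mkPiAlgebraFin F d A).domDomCongr σ

theorem permPolynomial_apply (c : Equiv.Perm (Fin d) → F) (y : Fin d → A) :
    permPolynomial A c y = ∑ σ, c σ • (List.ofFn (y ∘ σ)).prod := by
  simp [permPolynomial, Function.comp_def]

/-- The additive span of the values on an algebra of a noncommutative polynomial. -/
def valueSpan (A : Type*) [Ring A] [Algebra F A] (f : FreeAlgebra F X) : Submodule ℤ A :=
  Submodule.span ℤ (Set.range fun a : X → A ↦ FreeAlgebra.lift F a f)

theorem lift_mem_valueSpan (f : FreeAlgebra F X) (a : X → A) :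
    FreeAlgebra.lift F a f ∈ valueSpan A f :=
  Submodule.subset_span ⟨a, rfl⟩

/-- The coefficients of a noncommutative polynomial, indexed by words. -/
noncomputable def wordCoeff (f : FreeAlgebra F X) : FreeMonoid X →₀ F :=
  (FreeAlgebra.equivMonoidAlgebraFreeMonoid f).coeff

theorem lift_eq_sum_wordCoeff (f : FreeAlgebra F X) (a : X → A) :
    FreeAlgebra.lift F a f = (wordCoeff f).sum fun w r ↦ r • (w.toList.map a).prod := by
  have h : FreeAlgebra.lift F a = (MonoidAlgebra.lift F A (FreeMonoid X) (FreeMonoid.lift a)).comp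
      FreeAlgebra.equivMonoidAlgebraFreeMonoid.toAlgHom := by
    ext x
    simp [FreeAlgebra.equivMonoidAlgebraFreeMonoid]
  rw [h]
  simp [wordCoeff, MonoidAlgebra.lift_apply, FreeMonoid.lift_apply]

open Finset in
theorem sum_neg_one_pow_card_smul_map_sum_compl {n : ℕ} {M N ι : Type*} [AddCommGroup M]
    [AddCommGroup N] [Fintype ι] [DecidableEq ι] [Module F M] [Module F N]
    (φ : MultilinearMap F (fun _ : Fin n ↦ M) N) (y : Fin n → ι → M) :
    ∑ C : Finset ι, (-1 : ℤ) ^ #C • φ (fun k ↦ ∑ j ∈ Cᶜ, y k j) =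
      ∑ r : Fin n → ι with r.Surjective, φ fun k ↦ y k (r k) := by
  have hmem (r : Fin n → ι) (C : Finset ι) :
      r ∈ Fintype.piFinset (fun _ ↦ Cᶜ) ↔ C ∈ (univ.image r)ᶜ.powerset := by
    simp only [Fintype.mem_piFinset, mem_powerset, subset_compl_comm (s := C), image_subset_iff,
      mem_univ, true_imp_iff]
  have hsurj (r : Fin n → ι) : (univ.image r)ᶜ = ∅ ↔ r.Surjective := by
    simp only [compl_eq_empty_iff, eq_univ_iff_forall, mem_image, mem_univ, true_and,
      Function.Surjective]
  calc
    _ = ∑ C : Finset ι, ∑ r ∈ Fintype.piFinset (fun _ ↦ Cᶜ),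
          (-1 : ℤ) ^ #C • φ (fun k ↦ y k (r k)) := by
      simp only [φ.map_sum_finset, smul_sum]
    _ = ∑ r : Fin n → ι, ∑ C ∈ (univ.image r)ᶜ.powerset,
          (-1 : ℤ) ^ #C • φ (fun k ↦ y k (r k)) :=
      sum_comm' fun C r ↦ by simp [hmem]
    _ = _ := by
      simp only [← sum_smul, sum_powerset_neg_one_pow_card, hsurj, ite_smul, one_smul, zero_smul,
        sum_filter]

theorem sum_surjective_eq_sum_perm {M : Type*} [AddCommMonoid M] (g : (Fin d → Fin d) → M) :
    ∑ r with r.Surjective, g r = ∑ σ : Equiv.Perm (Fin d), g σ := by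
  refine (Finset.sum_bij (fun (σ : Equiv.Perm (Fin d)) _ ↦ (σ : Fin d → Fin d)) ?_ ?_ ?_ ?_).symm
  · exact fun σ _ ↦ Finset.mem_filter_univ _ |>.2 σ.surjective
  · exact fun σ _ τ _ h ↦ DFunLike.coe_injective h
  · intro r hr
    have hr : r.Bijective := Finite.surjective_iff_bijective.1 (by simpa using hr)
    exact ⟨.ofBijective r hr, Finset.mem_univ _, rfl⟩
  · exact fun _ _ ↦ rfl

open Classical in
theorem sum_neg_one_pow_card_smul_prod_map (v : Fin d → X) (y : Fin d → A)
    {w : FreeMonoid X} (hw : w.length ≤ d) :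
    ∑ C : Finset (Fin d), (-1 : ℤ) ^ C.card •
        (w.toList.map fun x ↦ ∑ j ∈ Cᶜ, if v j = x then y j else 0).prod =
      ∑ σ : Equiv.Perm (Fin d), if FreeMonoid.ofList (List.ofFn (v ∘ σ)) = w
        then (List.ofFn (y ∘ σ)).prod else 0 := by
  obtain ⟨n, w, rfl⟩ : ∃ n, ∃ w' : Fin n → X, w = FreeMonoid.ofList (List.ofFn w') :=
    ⟨_, w.toList.get, by simp⟩
  have hw : n ≤ d := by simpa [FreeMonoid.length] using hw
  have expand := sum_neg_one_pow_card_smul_map_sum_compl (MultilinearMap.mkPiAlgebraFin ℤ n A)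
    fun k j ↦ if v j = w k then y j else 0
  simp only [MultilinearMap.mkPiAlgebraFin_apply] at expand
  simp only [FreeMonoid.toList_ofList, List.map_ofFn, Function.comp_def, expand]
  rcases hw.lt_or_eq with hn | rfl
  · rw [Finset.sum_eq_zero, Finset.sum_eq_zero]
    · refine fun σ _ ↦ if_neg fun h ↦ hn.ne ?_
      simpa using (congrArg (fun w ↦ w.toList.length) h).symm
    · intro r hr
      have := Fintype.card_le_of_surjective r (by simpa using hr)
      simp only [Fintype.card_fin] at this
      exact absurd this hn.not_ge
  · rw [sum_surjective_eq_sum_perm]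
    refine Finset.sum_congr rfl fun σ _ ↦ ?_
    split_ifs with h
    · simp [← List.ofFn_injective h]
    · obtain ⟨k, hk⟩ : ∃ k, v (σ k) ≠ w k := by
        by_contra! h'
        exact h (congrArg List.ofFn (funext h'))
      exact List.prod_eq_zero ((List.mem_ofFn' _ _).2 ⟨k, if_neg hk⟩)

theorem exists_ne_one_mem_support_of_not_commute {f : FreeAlgebra F X} {a : X → A} {x : A}
    (hf : ¬Commute (FreeAlgebra.lift F a f) x) :
    ∃ w ∈ (wordCoeff f).support, w ≠ 1 := by
  by_contra! h
  refine hf ?_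
  rw [lift_eq_sum_wordCoeff]
  refine Commute.sum_left _ _ _ fun w hw ↦ ?_
  rw [h w hw]
  exact ((Commute.one_left x).smul_left _)

open Classical in
theorem sum_neg_one_pow_card_smul_lift {f : FreeAlgebra F X} (v : Fin d → X)
    (hf : ∀ w ∈ (wordCoeff f).support, w.length ≤ d)
    (y : Fin d → A) :
    ∑ C : Finset (Fin d), (-1 : ℤ) ^ C.card •
        FreeAlgebra.lift F (fun x ↦ ∑ j ∈ Cᶜ, if v j = x then y j else 0) f =
      permPolynomial A (fun σ ↦ wordCoeff f
        (FreeMonoid.ofList (List.ofFn (v ∘ σ)))) y := by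
  simp only [lift_eq_sum_wordCoeff, Finsupp.sum, Finset.smul_sum]
  rw [Finset.sum_comm]
  simp only [smul_comm ((-1 : ℤ) ^ _), ← Finset.smul_sum]
  rw [Finset.sum_congr rfl fun w hw ↦ by
    rw [sum_neg_one_pow_card_smul_prod_map v y (hf w hw)]]
  simp only [Finset.smul_sum, smul_ite, smul_zero, permPolynomial_apply]
  rw [Finset.sum_comm]
  refine Finset.sum_congr rfl fun σ _ ↦ ?_
  rw [Finset.sum_ite_eq]
  split_ifs with hu
  · rfl
  · rw [Finsupp.notMem_support_iff.1 hu, zero_smul]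

theorem exists_forall_permPolynomial_mem_valueSpan {f : FreeAlgebra F X} {a : X → A} {x : A}
    (hf : ¬Commute (FreeAlgebra.lift F a f) x) :
    ∃ (d : ℕ) (c : Equiv.Perm (Fin d) → F), 0 < d ∧ c 1 ≠ 0 ∧
      ∀ y, permPolynomial A c y ∈ valueSpan A f := by
  classical
  obtain ⟨w₁, hw₁, hw₁_ne⟩ := exists_ne_one_mem_support_of_not_commute hf
  obtain ⟨v, hv, hmax⟩ :=
    (wordCoeff f).support.exists_max_image FreeMonoid.length ⟨w₁, hw₁⟩
  obtain ⟨d, v, rfl⟩ : ∃ d, ∃ v' : Fin d → X, v = FreeMonoid.ofList (List.ofFn v') :=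
    ⟨_, v.toList.get, by simp⟩
  have hlength : FreeMonoid.length (FreeMonoid.ofList (List.ofFn v)) = d := by
    simp [FreeMonoid.length]
  rw [hlength] at hmax
  refine ⟨d, fun σ ↦ wordCoeff f (FreeMonoid.ofList (List.ofFn (v ∘ σ))), ?_, ?_, fun y ↦ ?_⟩
  · have : w₁.length ≠ 0 := by simpa using hw₁_ne
    exact (Nat.pos_of_ne_zero this).trans_le (hmax w₁ hw₁)
  · simpa using hv
  · rw [← sum_neg_one_pow_card_smul_lift v hmax y]
    exact sum_mem fun C _ ↦ Submodule.smul_mem _ _ (lift_mem_valueSpan f _)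

end Linearization

section CommutingValues

attribute [local instance] LieRing.ofAssociativeRing

variable {F A : Type*} [CommRing F] [Ring A] [Algebra F A] {d : ℕ} (c : Equiv.Perm (Fin d) → F)

theorem lie_prod_ofFn {n : ℕ} (x : A) (z : Fin n → A) :
    ⁅x, (List.ofFn z).prod⁆ = ∑ k, (List.ofFn (Function.update z k ⁅x, z k⁆)).prod := by
  induction n with
  | zero => simp [Ring.lie_def]
  | succ n ih =>
    have head : (List.ofFn (Function.update z 0 ⁅x, z 0⁆)).prod =
        ⁅x, z 0⁆ * (List.ofFn (Fin.tail z)).prod := by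
      simp [List.ofFn_succ, Fin.tail_def]
    have tail (k : Fin n) : (List.ofFn (Function.update z k.succ ⁅x, z k.succ⁆)).prod =
        z 0 * (List.ofFn (Function.update (Fin.tail z) k ⁅x, Fin.tail z k⁆)).prod := by
      rw [List.ofFn_succ, List.prod_cons, Function.update_of_ne (Fin.succ_ne_zero k).symm]
      exact congrArg (fun w ↦ z 0 * (List.ofFn w).prod) (Fin.tail_update_succ z k _)
    rw [Fin.sum_univ_succ, head, Finset.sum_congr rfl fun k _ ↦ tail k, ← Finset.mul_sum, ← ih,
      List.ofFn_succ, List.prod_cons]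
    simp only [Ring.lie_def, Fin.tail_def]
    noncomm_ring

theorem lie_permPolynomial (x : A) (y : Fin d → A) :
    ⁅x, permPolynomial A c y⁆ = ∑ j, permPolynomial A c (Function.update y j ⁅x, y j⁆) := by
  simp only [permPolynomial_apply, lie_sum]
  rw [Finset.sum_comm]
  refine Finset.sum_congr rfl fun σ _ ↦ ?_
  rw [Ring.lie_def, mul_smul_comm, smul_mul_assoc, ← smul_sub, ← Ring.lie_def, lie_prod_ofFn,
    Finset.smul_sum]
  refine Fintype.sum_equiv σ _ _ fun k ↦ ?_
  rw [Function.comp_apply, Function.update_comp_eq_of_injective _ σ.injective]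

/-- The additive span of the values of a multilinear polynomial, as a Lie ideal. -/
def permPolynomialLieIdeal (A : Type*) [Ring A] [Algebra F A] : LieIdeal ℤ A where
  __ := Submodule.span ℤ (Set.range (permPolynomial A c))
  lie_mem {x l} hl := by
    change ⁅x, l⁆ ∈ Submodule.span ℤ (Set.range (permPolynomial A c))
    induction hl using Submodule.span_induction with
    | mem _ hl =>
      obtain ⟨y, rfl⟩ := hl
      rw [lie_permPolynomial]
      exact sum_mem fun j _ ↦ Submodule.subset_span ⟨_, rfl⟩
    | zero => rw [lie_zero]; exact zero_mem _
    | add a b _ _ ha hb => rw [lie_add]; exact add_mem ha hb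
    | smul n a _ ha => rw [lie_smul]; exact Submodule.smul_mem _ n ha

/-- Any two values on `A` of the multilinear polynomial with coefficients `c` commute. -/
def HasCommutingValues (A : Type*) [Ring A] [Algebra F A] : Prop :=
  ∀ y z : Fin d → A, Commute (permPolynomial A c y) (permPolynomial A c z)

variable {c}

theorem mul_self_eq_top_of_not_hasCommutingValues [IsSimpleRing A] {T : Submodule ℤ A}
    (hc : ¬HasCommutingValues c A) (hT : ∀ y, permPolynomial A c y ∈ T) : T * T = ⊤ := by
  simp only [HasCommutingValues, not_forall] at hc
  obtain ⟨y, z, hyz⟩ := hc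
  have hle : (permPolynomialLieIdeal c A).toSubmodule ≤ T :=
    Submodule.span_le.2 (Set.range_subset_iff.2 hT)
  have htop : lieIdealSquare (permPolynomialLieIdeal c A) = ⊤ :=
    lieIdealSquare_eq_top (Submodule.subset_span ⟨y, rfl⟩) (Submodule.subset_span ⟨z, rfl⟩) hyz
  refine top_le_iff.1 (le_trans ?_ (mul_le_mul' hle hle))
  exact (congrArg LieSubmodule.toSubmodule htop).ge

theorem prod_ofFn_monomial {n : ℕ} (r : Fin n → ℕ) (a : Fin n → A) :
    (List.ofFn fun k ↦ Polynomial.monomial (r k) (a k)).prod =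
      Polynomial.monomial (∑ k, r k) (List.ofFn a).prod := by
  induction n with
  | zero => simp
  | succ n ih =>
    simp only [List.ofFn_succ, List.prod_cons, ih, Polynomial.monomial_mul_monomial,
      Fin.sum_univ_succ]

theorem permPolynomial_monomial (r : Fin d → ℕ) (a : Fin d → A) :
    permPolynomial (Polynomial A) c (fun k ↦ Polynomial.monomial (r k) (a k)) =
      Polynomial.monomial (∑ k, r k) (permPolynomial A c a) := by
  simp only [permPolynomial_apply, map_sum, Function.comp_def]
  refine Finset.sum_congr rfl fun σ _ ↦ ?_
  rw [prod_ofFn_monomial (fun k ↦ r (σ k)), Equiv.sum_comp σ r, Polynomial.smul_monomial]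

theorem HasCommutingValues.polynomial (hc : HasCommutingValues c A) :
    HasCommutingValues c (Polynomial A) := by
  intro p q
  have hp : p = fun k ↦ ∑ j ∈ (p k).support, Polynomial.monomial j ((p k).coeff j) :=
    funext fun k ↦ (p k).as_sum_support
  have hq : q = fun k ↦ ∑ j ∈ (q k).support, Polynomial.monomial j ((q k).coeff j) :=
    funext fun k ↦ (q k).as_sum_support
  rw [hp, hq, MultilinearMap.map_sum_finset, MultilinearMap.map_sum_finset]
  refine Commute.sum_left _ _ _ fun r _ ↦ Commute.sum_right _ _ _ fun s _ ↦ ?_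
  rw [permPolynomial_monomial r, permPolynomial_monomial s, commute_iff_eq,
    Polynomial.monomial_mul_monomial, Polynomial.monomial_mul_monomial, hc, add_comm]

end CommutingValues

section Staircase

variable {F A V : Type*} [Field F] [Ring A] [Algebra F A] [AddCommGroup V] [Module A V]

/-- Vectors `v i ≠ 0` and ring elements `x i` such that `x i` moves `v i` to `v (i + 1)` and kills
all earlier vectors, so that a word in distinct letters `x i`, `i ≥ a`, acts nontrivially on `v a`
only if its letters are consecutive. -/
structure IsStaircase (v : ℕ → V) (x : ℕ → A) : Prop where
  ne_zero (i : ℕ) : v i ≠ 0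
  smul_self (i : ℕ) : x i • v i = v (i + 1)
  smul_of_lt {i j : ℕ} (hji : j < i) : x i • v j = 0

variable (A) in
theorem exists_smul_eq_of_exists_smul_ne_zero [IsSimpleModule A V]
    (hann : ∀ s : Finset V, ∃ a : A, (∀ u ∈ s, a • u = 0) ∧ ∃ v : V, a • v ≠ 0)
    {s : Finset V} {v : V} (hv : ∃ a : A, (∀ u ∈ s, a • u = 0) ∧ a • v ≠ 0) :
    ∃ (x a : A), (∀ u ∈ s, x • u = 0) ∧ (∀ u ∈ s, a • u = 0) ∧ a • v = 0 ∧ a • x • v ≠ 0 := by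
  classical
  obtain ⟨a, ha, w, haw⟩ := hann (insert v s)
  obtain ⟨b, hb, hbv⟩ := hv
  obtain ⟨e, rfl⟩ := IsSimpleModule.toSpanSingleton_surjective A hbv w
  refine ⟨e * b, a, fun u hu ↦ by rw [mul_smul, hb u hu, smul_zero],
    fun u hu ↦ ha u (Finset.mem_insert_of_mem hu), ha v (Finset.mem_insert_self v s), ?_⟩
  rwa [mul_smul]

theorem exists_isStaircase [IsSimpleModule A V]
    (hann : ∀ s : Finset V, ∃ a : A, (∀ u ∈ s, a • u = 0) ∧ ∃ v : V, a • v ≠ 0) :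
    ∃ (v : ℕ → V) (x : ℕ → A), IsStaircase v x := by
  classical
  let State := {p : Finset V × V // ∃ a : A, (∀ u ∈ p.1, a • u = 0) ∧ a • p.2 ≠ 0}
  have step (p : State) : ∃ (x : A) (q : State), (∀ u ∈ p.1.1, x • u = 0) ∧
      q.1 = (insert p.1.2 p.1.1, x • p.1.2) := by
    obtain ⟨x, a, hxs, has, hav, haxv⟩ := exists_smul_eq_of_exists_smul_ne_zero A hann p.2
    exact ⟨x, ⟨(insert p.1.2 p.1.1, x • p.1.2), a, Finset.forall_mem_insert _ _ _ |>.2 ⟨hav, has⟩,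
      haxv⟩, hxs, rfl⟩
  choose x next hx hnext using step
  obtain ⟨a, -, w, haw⟩ := hann ∅
  let state (n : ℕ) : State := next^[n] ⟨(∅, w), a, by simp, haw⟩
  have hsucc (n : ℕ) : (state (n + 1)).1 =
      (insert (state n).1.2 (state n).1.1, x (state n) • (state n).1.2) := by
    rw [← hnext, ← Function.iterate_succ_apply' next n]
  have hmem {i j : ℕ} (hji : j < i) : (state j).1.2 ∈ (state i).1.1 := by
    induction i, hji using Nat.le_induction with
    | base => rw [hsucc]; exact Finset.mem_insert_self _ _
    | succ i _ ih => rw [hsucc]; exact Finset.mem_insert_of_mem ih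
  refine ⟨fun n ↦ (state n).1.2, fun n ↦ x (state n), fun n h ↦ ?_, fun n ↦ ?_,
    fun hji ↦ hx _ _ (hmem hji)⟩
  · obtain ⟨b, -, hb⟩ := (state n).2
    exact hb (by rw [h, smul_zero])
  · rw [hsucc]

namespace IsStaircase

variable {v : ℕ → V} {x : ℕ → A}

theorem prod_smul_eq_ite (h : IsStaircase v x) {n a : ℕ} {r : Fin n → ℕ}
    (hr : Function.Injective r) (ha : ∀ k, a ≤ r k) :
    (List.ofFn (x ∘ r)).prod • v a = if ∀ k, r k = a + k.rev then v (a + n) else 0 := by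
  induction n generalizing a with
  | zero => simp
  | succ n ih =>
    rw [List.ofFn_succ', List.concat_eq_append, List.prod_append, List.prod_singleton, mul_smul]
    change (List.ofFn (x ∘ (r ∘ Fin.castSucc))).prod • x (r (Fin.last n)) • v a = _
    obtain hlast | hlast := (ha (Fin.last n)).lt_or_eq
    · rw [h.smul_of_lt hlast, smul_zero, if_neg]
      exact fun hk ↦ hlast.ne' (by simpa using hk (Fin.last n))
    · have ha' (k : Fin n) : a + 1 ≤ r k.castSucc :=
        (ha _).lt_of_ne fun hk ↦ (Fin.castSucc_lt_last k).ne (hr (hk.symm.trans hlast))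
      rw [← hlast, h.smul_self,
        ih (hr.comp (Fin.castSucc_injective n)) ha']
      simp only [Fin.forall_fin_succ', Function.comp_apply, Fin.rev_castSucc, Fin.val_succ,
        Fin.rev_last, Fin.val_zero, add_zero, hlast.symm, and_true, add_assoc, add_comm 1]

variable [Module F V] [IsScalarTower F A V] {d : ℕ} {c : Equiv.Perm (Fin d) → F}

theorem permPolynomial_smul (h : IsStaircase v x) (hd : 0 < d) {a b : ℕ} (hab : a ≤ b) :
    permPolynomial A c (fun k ↦ x (b + k.rev)) • v a = if a = b then c 1 • v (a + d) else 0 := by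
  have hword (σ : Equiv.Perm (Fin d)) :
      (List.ofFn fun k ↦ x (b + (σ k).rev)).prod • v a =
        if ∀ k, b + ((σ k).rev : ℕ) = a + k.rev then v (a + d) else 0 :=
    h.prod_smul_eq_ite
      (fun k l hkl ↦ σ.injective (Fin.rev_injective (Fin.ext (Nat.add_left_cancel hkl))))
      fun k ↦ hab.trans (Nat.le_add_right _ _)
  simp only [permPolynomial_apply, Finset.sum_smul, smul_assoc, Function.comp_def, hword]
  split_ifs with h
  · subst h
    rw [Finset.sum_eq_single 1 (fun σ _ hσ ↦ ?_) (by simp)]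
    · simp
    · rw [if_neg, smul_zero]
      exact fun hk ↦ hσ (Equiv.ext fun k ↦ Fin.rev_injective (Fin.ext (by simpa using hk k)))
  · refine Finset.sum_eq_zero fun σ _ ↦ ?_
    rw [if_neg, smul_zero]
    intro hk
    have := hk ⟨d - 1, by lia⟩
    simp only [Fin.val_rev] at this
    lia

theorem not_hasCommutingValues (h : IsStaircase v x) (hd : 0 < d) (hc : c 1 ≠ 0) :
    ¬HasCommutingValues c A := by
  intro hcomm
  have key := congrArg (· • v 0)
    (hcomm (fun k ↦ x (d + k.rev)) (fun k ↦ x (0 + k.rev))).eq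
  simp only [mul_smul] at key
  rw [h.permPolynomial_smul hd le_rfl, h.permPolynomial_smul hd hd.le, if_pos rfl, if_neg hd.ne,
    smul_zero, smul_comm, zero_add, h.permPolynomial_smul hd le_rfl, if_pos rfl] at key
  exact smul_ne_zero hc (smul_ne_zero hc (h.ne_zero _)) key

end IsStaircase

theorem HasCommutingValues.exists_finset_forall_smul_eq_zero [Module F V] [IsScalarTower F A V]
    [IsSimpleModule A V] {d : ℕ} {c : Equiv.Perm (Fin d) → F} (h : HasCommutingValues c A)
    (hd : 0 < d) (hc : c 1 ≠ 0) :
    ∃ s : Finset V, ∀ a : A, (∀ u ∈ s, a • u = 0) → ∀ v : V, a • v = 0 := by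
  by_contra! hann
  obtain ⟨v, x, hvx⟩ := exists_isStaircase hann
  exact hvx.not_hasCommutingValues hd hc h

theorem HasCommutingValues.isArtinianRing [IsSimpleRing A] {d : ℕ} {c : Equiv.Perm (Fin d) → F}
    (h : HasCommutingValues c A) (hd : 0 < d) (hc : c 1 ≠ 0) : IsArtinianRing A := by
  obtain ⟨I, hI⟩ := Ideal.exists_maximal A
  have : IsSimpleModule A (A ⧸ I) := isSimpleModule_iff_isCoatom.2 hI.out
  have faithful {a : A} (ha : ∀ v : A ⧸ I, a • v = 0) : a = 0 := by
    by_contra ha0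
    have htop : (Module.annihilator A (A ⧸ I)).restrictScalars ℤ = ⊤ :=
      submodule_eq_top_of_mul_mul_mem _ ha0 fun x y ↦ Module.mem_annihilator.2 fun v ↦ by
        rw [mul_smul, mul_smul, ha, smul_zero]
    have hone : (1 : A) ∈ Module.annihilator A (A ⧸ I) := by
      rw [← Submodule.restrictScalars_mem ℤ, htop]; trivial
    obtain ⟨v, hv⟩ := @exists_ne (A ⧸ I) (IsSimpleModule.nontrivial A _) 0
    exact hv (by simpa using Module.mem_annihilator.1 hone v)
  obtain ⟨s, hs⟩ := h.exists_finset_forall_smul_eq_zero (V := A ⧸ I) hd hc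
  let φ : A →ₗ[A] (s → A ⧸ I) := LinearMap.pi fun v ↦ LinearMap.toSpanSingleton A _ v.1
  refine isArtinian_of_injective φ ((injective_iff_map_eq_zero φ).2 fun a ha ↦ faithful (hs a ?_))
  exact fun v hv ↦ congrFun ha ⟨v, hv⟩

end Staircase

section Algebraic

open Polynomial

variable {D : Type*} [DivisionRing D]

theorem exists_monic_map_mem_of_ne_bot {I : Ideal D[X]} [I.IsTwoSided] (hI : I ≠ ⊥) :
    ∃ q : (Subring.center D)[X], q.Monic ∧ q.map (algebraMap (Subring.center D) D) ∈ I := by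
  obtain ⟨p, ⟨hpI, hp0⟩, hmin⟩ :=
    degree_lt_wf.has_min {p | p ∈ I ∧ p ≠ 0} (Submodule.exists_mem_ne_zero_of_ne_bot hI)
  set q := C p.leadingCoeff⁻¹ * p with hq
  have hqI : q ∈ I := I.mul_mem_left _ hpI
  have hlc : p.leadingCoeff ≠ 0 := leadingCoeff_ne_zero.2 hp0
  have hmonic : q.Monic := by simp [hq, Monic, hlc]
  have hdeg : q.degree = p.degree := by
    rw [hq, degree_mul, degree_C (inv_ne_zero hlc), zero_add]
  have hcomm (b : D) : q * C b = C b * q := by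
    rcases eq_or_ne b 0 with rfl | hb
    · simp
    by_contra hne
    refine hmin (q * C b - C b * q)
      ⟨sub_mem (I.mul_mem_right _ hqI) (I.mul_mem_left _ hqI), sub_ne_zero.2 hne⟩ ?_
    have hb' : (C b).degree = 0 := degree_C hb
    rw [← hdeg]
    calc (q * C b - C b * q).degree < (q * C b).degree :=
          degree_sub_lt_left (by rw [degree_mul, degree_mul (p := C b), add_comm])
            (mul_ne_zero hmonic.ne_zero (C_ne_zero.2 hb)) (by simp [hmonic])
      _ = q.degree := by rw [degree_mul, hb', add_zero]
  have hlifts : q ∈ lifts (algebraMap (Subring.center D) D) := by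
    refine (lifts_iff_coeff_lifts q).2 fun n ↦
      ⟨⟨q.coeff n, Subring.mem_center_iff.2 fun b ↦ ?_⟩, rfl⟩
    simpa using congrArg (coeff · n) (hcomm b).symm
  obtain ⟨r, hr, -, hr'⟩ := lifts_and_natDegree_eq_and_monic hlifts hmonic
  exact ⟨r, hr', hr ▸ hqI⟩

/-- The action of `D[X]` on `D` in which coefficients multiply on the left and the variable
multiplies by `y` on the right. -/
noncomputable def bimoduleHom (y : D) : D[X] →+* Module.End ℤ D :=
  eval₂RingHom' (Algebra.lmul ℤ D : D →+* Module.End ℤ D) (LinearMap.mulRight ℤ y)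
    fun a ↦ LinearMap.commute_mulLeft_right a y

theorem bimoduleHom_C (y a v : D) : bimoduleHom y (C a) v = a * v := by
  have h : bimoduleHom y (C a) = LinearMap.mulLeft ℤ a := eval₂_C _ _
  rw [h, LinearMap.mulLeft_apply]

theorem bimoduleHom_X_pow (y v : D) (n : ℕ) : bimoduleHom y (X ^ n) v = v * y ^ n := by
  have h : bimoduleHom y (X ^ n) = LinearMap.mulRight ℤ y ^ n := eval₂_X_pow _ _
  rw [h, LinearMap.pow_mulRight, LinearMap.mulRight_apply]

theorem bimoduleHom_map (y : D) (q : (Subring.center D)[X]) :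
    bimoduleHom y (q.map (algebraMap (Subring.center D) D)) 1 = aeval y q := by
  induction q using Polynomial.induction_on' with
  | add p q hp hq => rw [Polynomial.map_add, map_add, map_add, ← hp, ← hq, LinearMap.add_apply]
  | monomial n a =>
    rw [map_monomial, ← C_mul_X_pow_eq_monomial, map_mul, Module.End.mul_apply, bimoduleHom_C,
      bimoduleHom_X_pow, one_mul, aeval_monomial]

/-- The `D[X]`-module structure on `D` given by `bimoduleHom y`. -/
noncomputable abbrev bimodule (y : D) : Module D[X] D :=
  Module.compHom D (bimoduleHom y)

theorem isAlgebraic_of_annihilator_ne_bot {y : D}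
    (h : letI := bimodule y; Module.annihilator D[X] D ≠ ⊥) :
    IsAlgebraic (Subring.center D) y := by
  let _ := bimodule y
  obtain ⟨q, hq, hqI⟩ := exists_monic_map_mem_of_ne_bot h
  exact ⟨q, hq.ne_zero, bimoduleHom_map y q ▸ Module.mem_annihilator.1 hqI 1⟩

theorem HasCommutingValues.isAlgebraic_center {F : Type*} [Field F] [Algebra F D] {d : ℕ}
    {c : Equiv.Perm (Fin d) → F} (h : HasCommutingValues c D) (hd : 0 < d) (hc : c 1 ≠ 0) (y : D) :
    IsAlgebraic (Subring.center D) y := by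
  let _ := bimodule y
  have hC (a v : D) : C a • v = a * v := bimoduleHom_C y a v
  have : IsScalarTower F D[X] D := .of_algebraMap_smul fun r v ↦ by
    rw [Polynomial.algebraMap_apply, hC, Algebra.smul_def]
  have : IsSimpleModule D[X] D := isSimpleModule_iff_toSpanSingleton_surjective.2
    ⟨inferInstance, fun x hx z ↦ ⟨C (z * x⁻¹), by
      rw [LinearMap.toSpanSingleton_apply, hC, inv_mul_cancel_right₀ hx]⟩⟩
  obtain ⟨s, hs⟩ := h.polynomial.exists_finset_forall_smul_eq_zero (V := D) hd hc
  let φ : D[X] →ₗ[D] (s → D) :=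
    { toFun p v := p • (v : D)
      map_add' p q := funext fun v ↦ add_smul p q (v : D)
      map_smul' a p := funext fun v ↦ by
        rw [smul_eq_C_mul, mul_smul, hC]; rfl }
  have hφ : ¬Function.Injective φ := fun hφ ↦
    Polynomial.not_finite (Module.Finite.of_injective φ hφ)
  simp only [injective_iff_map_eq_zero, not_forall] at hφ
  obtain ⟨p, hp, hp0⟩ := hφ
  refine isAlgebraic_of_annihilator_ne_bot ((Submodule.ne_bot_iff _).2 ⟨p, ?_, hp0⟩)
  exact Module.mem_annihilator.2 (hs p fun v hv ↦ congrFun hp ⟨v, hv⟩)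

end Algebraic

section Jacobson

open Polynomial

theorem prod_X_sub_C_eq_X_pow_card_sub_X (K : Type*) [Field K] [Fintype K] :
    ∏ κ : K, (X - C κ) = X ^ Fintype.card K - X := by
  have hK : 1 < Fintype.card K := Fintype.one_lt_card
  have hmonic : (X ^ Fintype.card K - X : K[X]).Monic := monic_X_pow_sub (by simpa using hK)
  have hroots := FiniteField.roots_X_pow_card_sub_X K
  rw [← prod_multiset_X_sub_C_of_monic_of_roots_card_eq hmonic (by
    rw [hroots, FiniteField.X_pow_card_sub_X_natDegree_eq K hK]; rfl), hroots]
  rfl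

theorem exists_hasEigenvalue_ne_of_pow_card_eq_self {K V : Type*} [Field K] [Fintype K]
    [AddCommGroup V] [Module K V] {φ : Module.End K V} (hφ : φ ^ Fintype.card K = φ) {κ₀ : K}
    (hκ₀ : φ ≠ algebraMap K _ κ₀) : ∃ κ ≠ κ₀, φ.HasEigenvalue κ := by
  classical
  by_contra! h
  have hinj : Function.Injective (aeval φ (∏ κ ∈ Finset.univ.erase κ₀, (X - C κ))) := by
    refine Finset.prod_induction _ (fun p ↦ Function.Injective (aeval φ p)) (fun p q hp hq ↦ ?_)
      (by rw [map_one]; exact Function.injective_id) fun κ hκ ↦ ?_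
    · rw [map_mul]
      exact hp.comp hq
    · have := h κ (Finset.ne_of_mem_erase hκ)
      rw [Module.End.hasEigenvalue_iff, not_not, Module.End.eigenspace_def,
        LinearMap.ker_eq_bot, ← Algebra.algebraMap_eq_smul_one] at this
      rwa [map_sub, aeval_X, aeval_C]
  have hprod : aeval φ (∏ κ ∈ Finset.univ.erase κ₀, (X - C κ)) * aeval φ (X - C κ₀) = 0 := by
    rw [← map_mul, Finset.prod_erase_mul _ _ (Finset.mem_univ _),
      prod_X_sub_C_eq_X_pow_card_sub_X]
    simp [hφ]
  refine hκ₀ (sub_eq_zero.1 (LinearMap.ext fun v ↦ hinj ?_))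
  simpa using LinearMap.congr_fun hprod v

theorem exists_subalgebra_toSubmodule_eq_mul_adjoin {k A : Type*} [CommRing k] [Ring A]
    [Algebra k A] (S : Subalgebra k A) (u : Aˣ) (hu : S.map (innerAut k u).toAlgHom ≤ S) :
    ∃ E : Subalgebra k A,
      E.toSubmodule = S.toSubmodule * (Algebra.adjoin k {(u : A)}).toSubmodule := by
  set B := Algebra.adjoin k {(u : A)} with hB
  have hpow (n : ℕ) : ∀ s ∈ S, ∃ t ∈ S, (u : A) ^ n * s = t * u ^ n := by
    induction n with
    | zero => exact fun s hs ↦ ⟨s, hs, by simp⟩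
    | succ n ih =>
      intro s hs
      obtain ⟨t, ht, hst⟩ := ih _ (hu ⟨s, hs, rfl⟩)
      refine ⟨t, ht, ?_⟩
      calc (u : A) ^ (n + 1) * s = u ^ n * (u * s * ↑u⁻¹) * u := by
            rw [pow_succ]; simp [mul_assoc]
        _ = t * u ^ n * u := congrArg (· * (u : A)) hst
        _ = t * u ^ (n + 1) := by rw [mul_assoc, ← pow_succ]
  have hcomm : B.toSubmodule * S.toSubmodule ≤ S.toSubmodule * B.toSubmodule := by
    refine Submodule.mul_le.2 fun b hb s hs ↦ ?_
    rw [hB, Algebra.adjoin_eq_span, ← Submonoid.powers_eq_closure] at hb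
    induction hb using Submodule.span_induction with
    | mem _ hb =>
      obtain ⟨n, rfl⟩ := hb
      obtain ⟨t, ht, hst⟩ := hpow n s hs
      simp only [hst]
      exact Submodule.mul_mem_mul ht (pow_mem (Algebra.self_mem_adjoin_singleton k (u : A)) n)
    | zero => simp
    | add b b' _ _ h h' => rw [add_mul]; exact add_mem h h'
    | smul r b _ h => rw [smul_mul_assoc]; exact Submodule.smul_mem _ r h
  refine ⟨(S.toSubmodule * B.toSubmodule).toSubalgebra
    (Submodule.one_le.1 ?_) fun x y hx hy ↦ ?_, Submodule.toSubalgebra_toSubmodule _ _ _⟩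
  · exact one_le_mul (Submodule.one_le.2 (one_mem S)) (Submodule.one_le.2 (one_mem B))
  · refine (?_ : S.toSubmodule * B.toSubmodule * (S.toSubmodule * B.toSubmodule) ≤ _)
      (Submodule.mul_mem_mul hx hy)
    calc S.toSubmodule * B.toSubmodule * (S.toSubmodule * B.toSubmodule)
        = S.toSubmodule * (B.toSubmodule * S.toSubmodule) * B.toSubmodule := by
          simp only [mul_assoc]
      _ ≤ S.toSubmodule * (S.toSubmodule * B.toSubmodule) * B.toSubmodule := by gcongr
      _ = S.toSubmodule * S.toSubmodule * (B.toSubmodule * B.toSubmodule) := by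
          simp only [mul_assoc]
      _ = S.toSubmodule * B.toSubmodule := by
          rw [S.isIdempotentElem_toSubmodule, B.isIdempotentElem_toSubmodule]

variable {k D : Type*} [Field k] [DivisionRing D] [Algebra k D]

theorem exists_conj_mem_adjoin_singleton_ne [Finite k] {a : D} (ha : IsIntegral k a)
    (hac : a ∉ Subring.center D) :
    ∃ u : Dˣ, u * a * ↑u⁻¹ ∈ Algebra.adjoin k {a} ∧ u * a * ↑u⁻¹ ≠ a := by
  set K := Algebra.adjoin k {a}
  have : Module.Finite k K := Module.Finite.iff_fg.2 ha.fg_adjoin_singleton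
  have : Finite K := Module.finite_of_finite k
  let _ : Fintype K := Fintype.ofFinite K
  let _ : Field K := (Finite.isDomain_to_isField K).toField
  let α : K := ⟨a, Algebra.self_mem_adjoin_singleton k a⟩
  let φ : Module.End K D := (LinearMap.toSpanSingleton D D a).restrictScalars K
  have hpow (n : ℕ) (v : D) : (φ ^ n) v = v * a ^ n := by
    rw [Module.End.pow_apply]
    exact mul_right_iterate_apply a v
  have hφ : φ ^ Fintype.card K = φ := LinearMap.ext fun v ↦ by
    rw [hpow]
    exact congrArg (v * ·) (congrArg Subtype.val (FiniteField.pow_card α))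
  have hne : φ ≠ algebraMap K _ α := fun h ↦
    hac (Subring.mem_center_iff.2 fun v ↦ LinearMap.congr_fun h v)
  obtain ⟨κ, hκ, hκφ⟩ := exists_hasEigenvalue_ne_of_pow_card_eq_self hφ hne
  obtain ⟨x, hx⟩ := hκφ.exists_hasEigenvector
  have hxa : x * a = κ * x := hx.apply_eq_smul
  have hconj : x * a * x⁻¹ = κ := by rw [hxa, mul_inv_cancel_right₀ hx.2]
  refine ⟨Units.mk0 x hx.2, ?_, ?_⟩ <;> rw [Units.val_inv_eq_inv_val, Units.val_mk0, hconj]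
  · exact κ.2
  · exact fun h ↦ hκ (Subtype.ext h)

theorem commute_of_isAlgebraic_of_finite [Finite k] [Algebra.IsAlgebraic k D] (a b : D) :
    Commute a b := by
  by_contra hab
  have hint (y : D) : IsIntegral k y := Algebra.IsIntegral.isIntegral y
  obtain ⟨u, hu, hne⟩ := exists_conj_mem_adjoin_singleton_ne (hint a)
    fun h ↦ hab (Subring.mem_center_iff.1 h b).symm
  obtain ⟨E, hE⟩ := exists_subalgebra_toSubmodule_eq_mul_adjoin (Algebra.adjoin k {a}) u (by
    rw [AlgHom.map_adjoin, Set.image_singleton]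
    exact Algebra.adjoin_le (Set.singleton_subset_iff.2 hu))
  have : Module.Finite k E := Module.Finite.iff_fg.2 <|
    show E.toSubmodule.FG from hE ▸ (hint a).fg_adjoin_singleton.mul (hint u).fg_adjoin_singleton
  have : Finite E := Module.finite_of_finite k
  have hone (s : Set D) : (1 : Submodule k D) ≤ (Algebra.adjoin k s).toSubmodule :=
    Submodule.one_le.2 (Algebra.adjoin k s).one_mem
  have haE : a ∈ E.toSubmodule :=
    hE ▸ le_mul_of_one_le_right' (hone _) (Algebra.self_mem_adjoin_singleton k a)
  have huE : (u : D) ∈ E.toSubmodule :=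
    hE ▸ le_mul_of_one_le_left' (hone _) (Algebra.self_mem_adjoin_singleton k (u : D))
  have hcomm : (u : D) * a = a * u :=
    congrArg Subtype.val ((Finite.isDomain_to_isField E).mul_comm ⟨u, huE⟩ ⟨a, haE⟩)
  exact hne (by rw [hcomm, Units.mul_inv_cancel_right])

end Jacobson

section PartialFractions

variable {K D : Type*} [Field K] [DivisionRing D] [Algebra K D]

theorem inv_sub_algebraMap_mul_inv_sub_algebraMap {y : D} {x x' : K} (hx : y ≠ algebraMap K D x)
    (hx' : y ≠ algebraMap K D x') (h : x ≠ x') :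
    (y - algebraMap K D x)⁻¹ * (y - algebraMap K D x')⁻¹ =
      (x - x')⁻¹ • ((y - algebraMap K D x)⁻¹ - (y - algebraMap K D x')⁻¹) := by
  rw [inv_sub_inv' (sub_ne_zero.2 hx) (sub_ne_zero.2 hx'), sub_sub_sub_cancel_left, ← map_sub,
    ← Algebra.commutes, mul_assoc, ← Algebra.smul_def, inv_smul_smul₀ (sub_ne_zero.2 h)]

variable [Infinite K]

/- The span `W` of the inverses `(y - x)⁻¹` is finite-dimensional, and for a new `x` partial
fractions show that multiplication by `(y - x)⁻¹` maps `W` to `W`, hence onto `W`. -/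
theorem one_mem_span_inv_sub_algebraMap {y : D} (hy : IsIntegral K y)
    (hyK : y ∉ Set.range (algebraMap K D)) :
    1 ∈ Submodule.span K (Set.range fun x : K ↦ (y - algebraMap K D x)⁻¹) := by
  classical
  set g : K → D := fun x ↦ (y - algebraMap K D x)⁻¹
  set W := Submodule.span K (Set.range g)
  have hne (x : K) : y ≠ algebraMap K D x := fun h ↦ hyK ⟨x, h.symm⟩
  have hg (x : K) : g x ∈ W := Submodule.subset_span ⟨x, rfl⟩
  have : Module.Finite K (Algebra.adjoin K {y}) := Module.Finite.iff_fg.2 hy.fg_adjoin_singleton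
  have hW : W ≤ (Algebra.adjoin K {y}).toSubmodule :=
    Submodule.span_le.2 <| Set.range_subset_iff.2 fun x ↦ Algebra.IsIntegral.inv_mem <|
      sub_mem (Algebra.self_mem_adjoin_singleton K y) (Subalgebra.algebraMap_mem _ x)
  have : FiniteDimensional K W := Submodule.finiteDimensional_of_le hW
  obtain ⟨s, hs⟩ : ∃ s : Finset K, Submodule.span K (g '' s) = W := by
    obtain ⟨t, ht, hspan⟩ :=
      Submodule.fg_span_iff_fg_span_finset_subset _ |>.1 (Module.Finite.iff_fg.1 this)
    obtain ⟨s, -, rfl⟩ := Finset.subset_set_image_iff.1 (Set.image_univ (f := g) ▸ ht)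
    exact ⟨s, (Finset.coe_image (f := g) (s := s)) ▸ hspan.symm⟩
  obtain ⟨x, hx⟩ := Infinite.exists_notMem_finset s
  have hmaps (w : D) (hw : w ∈ W) : g x * w ∈ W := by
    have hle : W ≤ W.comap (LinearMap.mulLeft K (g x)) := hs ▸ Submodule.span_le.2 (by
      rintro _ ⟨x', hx', rfl⟩
      have hxx' : x ≠ x' := fun h ↦ hx (h ▸ hx')
      have hmul := inv_sub_algebraMap_mul_inv_sub_algebraMap (hne x) (hne x') hxx'
      change g x * g x' ∈ Submodule.span K (g '' s)
      exact hs ▸ hmul.symm ▸ W.smul_mem _ (sub_mem (hg x) (hg x')))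
    exact hle hw
  have hgx : g x ≠ 0 := inv_ne_zero (sub_ne_zero.2 (hne x))
  have hinj : Function.Injective ((LinearMap.mulLeft K (g x)).restrict hmaps) := fun w w' h ↦
    Subtype.ext (mul_left_cancel₀ hgx (congrArg Subtype.val h))
  obtain ⟨w, hw⟩ := LinearMap.injective_iff_surjective.1 hinj ⟨g x, hg x⟩
  have hw : g x * w = g x := congrArg Subtype.val hw
  exact (mul_right_eq_self₀.1 hw).resolve_right hgx ▸ w.2

theorem IsInnerInvariant.mul_sub_mul_mem [Algebra.IsIntegral K D] {V : Submodule K D}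
    (hV : IsInnerInvariant V) (y : D) {l : D} (hl : l ∈ V) : y * l - l * y ∈ V := by
  by_cases hy : y ∈ Set.range (algebraMap K D)
  · obtain ⟨x, rfl⟩ := hy
    simp [Algebra.commutes]
  have hle : Submodule.span K (Set.range fun x : K ↦ (y - algebraMap K D x)⁻¹) ≤
      V.comap (LinearMap.mulLeft K (y * l - l * y)) := by
    refine Submodule.span_le.2 (Set.range_subset_iff.2 fun x ↦ ?_)
    have hx : y - algebraMap K D x ≠ 0 := fun h ↦ hy ⟨x, (sub_eq_zero.1 h).symm⟩
    have hcomm : y * l - l * y = (y - algebraMap K D x) * l - l * (y - algebraMap K D x) := by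
      rw [sub_mul, mul_sub, Algebra.commutes]; abel
    have hconj : (y * l - l * y) * (y - algebraMap K D x)⁻¹ =
        (y - algebraMap K D x) * l * (y - algebraMap K D x)⁻¹ - l := by
      rw [hcomm, sub_mul, mul_inv_cancel_right₀ hx]
    simpa [hconj] using sub_mem (hV (Units.mk0 _ hx) l hl) hl
  simpa using hle (one_mem_span_inv_sub_algebraMap (Algebra.IsIntegral.isIntegral y) hy)

end PartialFractions

section PowerMultipliers

variable {Z M : Type*} [Field Z] [AddCommGroup M] [Module Z M] {m : ℕ}

/-- The multipliers `{z | z V ⊆ V}` of an additive subgroup `V` of a vector space, which form a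
subfield as soon as they contain all `m`-th powers. -/
def multiplierSubfield (V : AddSubgroup M) (hm : 0 < m) (hV : ∀ (z : Z), ∀ x ∈ V, z ^ m • x ∈ V) :
    Subfield Z where
  carrier := {z | ∀ x ∈ V, z • x ∈ V}
  mul_mem' hz hw x hx := by rw [mul_smul]; exact hz _ (hw x hx)
  one_mem' x hx := by rwa [one_smul]
  add_mem' hz hw x hx := by rw [add_smul]; exact add_mem (hz x hx) (hw x hx)
  zero_mem' x _ := by rw [zero_smul]; exact V.zero_mem
  neg_mem' hz x hx := by rw [neg_smul]; exact neg_mem (hz x hx)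
  inv_mem' z hz x hx := by
    have hpow (n : ℕ) : z ^ n • x ∈ V := by
      induction n with
      | zero => simpa
      | succ n ih => rw [pow_succ', mul_smul]; exact hz _ ih
    have hinv : z⁻¹ = z⁻¹ ^ m * z ^ (m - 1) := by
      rcases eq_or_ne z 0 with rfl | hz0
      · simp [hm.ne']
      · rw [← Nat.succ_pred_eq_of_pos hm, Nat.succ_sub_one, pow_succ', mul_assoc, ← mul_pow,
          inv_mul_cancel₀ hz0, one_pow, mul_one]
    rw [hinv, mul_smul]
    exact hV _ _ (hpow _)

theorem infinite_subfield_of_forall_pow_mem [Infinite Z] {K : Subfield Z} (hm : 0 < m)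
    (hK : ∀ z : Z, z ^ m ∈ K) : Infinite K := by
  classical
  by_contra hfin
  have hfin : (K : Set Z).Finite := Set.not_infinite.1 fun h ↦ hfin h.to_subtype
  have hroots (b : Z) : ((· ^ m) ⁻¹' {b} : Set Z).Finite :=
    (Polynomial.nthRoots m b).toFinset.finite_toSet.subset fun z hz ↦ by
      simpa [Polynomial.mem_nthRoots hm] using hz
  exact Set.infinite_univ ((hfin.preimage' fun b _ ↦ hroots b).subset fun z _ ↦ hK z)

theorem isIntegral_subfield_of_forall_pow_mem {K : Subfield Z} (hm : 0 < m)
    (hK : ∀ z : Z, z ^ m ∈ K) : Algebra.IsIntegral K Z :=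
  ⟨fun z ↦ .of_pow hm (isIntegral_algebraMap (x := (⟨z ^ m, hK z⟩ : K)))⟩

end PowerMultipliers

section PowerMultiples

attribute [local instance] LieRing.ofAssociativeRing

variable {D : Type*} [DivisionRing D] [Infinite (Subring.center D)]
  [Algebra.IsAlgebraic (Subring.center D) D]

theorem IsInnerInvariant.mul_self_eq_top_of_pow_smul_mem {T : Submodule ℤ D}
    (hT : IsInnerInvariant T) {m : ℕ} (hm : 0 < m) {v : D} (hv : v ∉ Subring.center D)
    (hvT : ∀ z : Subring.center D, z ^ m • v ∈ T) : T * T = ⊤ := by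
  let V : AddSubgroup D :=
    { carrier := {x | ∀ z : Subring.center D, z ^ m • x ∈ T}
      add_mem' := fun hx hy z ↦ by rw [smul_add]; exact add_mem (hx z) (hy z)
      zero_mem' := fun z ↦ by rw [smul_zero]; exact T.zero_mem
      neg_mem' := fun hx z ↦ by rw [smul_neg]; exact neg_mem (hx z) }
  have hVpow (z : Subring.center D) (x : D) (hx : x ∈ V) : z ^ m • x ∈ V := fun w ↦ by
    rw [← mul_smul, ← mul_pow]; exact hx _
  let K := multiplierSubfield V hm hVpow
  have : Infinite K := infinite_subfield_of_forall_pow_mem hm hVpow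
  have := isIntegral_subfield_of_forall_pow_mem (K := K) hm hVpow
  have : Algebra.IsIntegral K D := Algebra.IsIntegral.trans (Subring.center D)
  let W : Submodule K D := { V with smul_mem' := fun z x hx ↦ z.2 x hx }
  have hW : IsInnerInvariant W := fun u x hx z ↦ by
    simpa [mul_smul_comm, smul_mul_assoc] using hT u _ (hx z)
  let L : LieIdeal ℤ D :=
    { __ := AddSubgroup.toIntSubmodule V
      lie_mem := fun {y l} hl ↦ hW.mul_sub_mul_mem y hl }
  obtain ⟨w, hw, hvw⟩ := hW.exists_not_commute (a := v) hvT hv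
  have hVT (x : D) (hx : x ∈ V) : x ∈ T := by simpa using hx 1
  refine eq_top_iff.2 fun x _ ↦ ?_
  have hx : x ∈ lieIdealSquare L := lieIdealSquare_eq_top (L := L) hvT hw hvw ▸ trivial
  exact mul_le_mul' (show L.toSubmodule ≤ T from hVT) hVT hx

end PowerMultiples

section CentralCurves

attribute [local instance] LieRing.ofAssociativeRing LieAlgebra.ofAssociativeAlgebra

open Polynomial

theorem eval_comp_C_mul_X {R : Type*} [Semiring R] (p : R[X]) {c z : R} (h : Commute c z) :
    (p.comp (C c * X)).eval z = p.eval (c * z) := by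
  induction p using Polynomial.induction_on' with
  | add p q hp hq => rw [add_comp, eval_add, eval_add, hp, hq]
  | monomial n a =>
    rw [monomial_comp, (commute_X (C c)).symm.mul_pow, ← C_pow, eval_C_mul, eval_C_mul, eval_X_pow,
      eval_monomial, h.mul_pow]

theorem exists_pow_ne_pow (R : Type*) [CommRing R] [IsDomain R] [Infinite R] {i j : ℕ}
    (hij : i ≠ j) : ∃ c : R, c ^ i ≠ c ^ j := by
  by_contra! h
  have hX : (X ^ i : R[X]) = X ^ j := funext fun c ↦ by simpa using h c
  exact hij (by simpa using congrArg natDegree hX)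

variable {D : Type*} [DivisionRing D]

theorem commute_of_conj_sub_mem_center {u v : D} (hu₀ : u ≠ 0) (hu₁ : u + 1 ≠ 0)
    (h₀ : u * v * u⁻¹ - v ∈ Subring.center D)
    (h₁ : (u + 1) * v * (u + 1)⁻¹ - v ∈ Subring.center D) : Commute u v := by
  set z₀ := u * v * u⁻¹ - v
  set z₁ := (u + 1) * v * (u + 1)⁻¹ - v
  have hz₀ : z₀ * u = u * v - v * u := by rw [sub_mul, inv_mul_cancel_right₀ hu₀]
  have hz₁ : z₁ * (u + 1) = (u + 1) * v - v * (u + 1) := by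
    rw [sub_mul, inv_mul_cancel_right₀ hu₁]
  have hsub : (z₀ - z₁) * u = z₁ := by
    rw [sub_mul, hz₀, sub_eq_iff_eq_add, ← mul_one_add, add_comm 1, hz₁]; noncomm_ring
  by_cases hz : z₀ - z₁ = 0
  · rw [hz, zero_mul] at hsub
    rw [sub_eq_zero.1 hz, ← hsub, zero_mul] at hz₀
    exact sub_eq_zero.1 hz₀.symm
  · rw [← inv_mul_cancel_left₀ hz u, hsub]
    refine (Commute.inv_left₀ ?_).mul_left ?_
    · exact (Subring.mem_center_iff.1 (sub_mem h₀ h₁) v).symm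
    · exact (Subring.mem_center_iff.1 h₁ v).symm

/-- The polynomial curves in a division ring with central constant term whose points with central
parameter all lie in `T`. -/
def centralCurves (T : Submodule ℤ D) : AddSubgroup D[X] where
  carrier := {p | p.coeff 0 ∈ Subring.center D ∧ ∀ z ∈ Subring.center D, p.eval z ∈ T}
  add_mem' hp hq := ⟨by rw [coeff_add]; exact add_mem hp.1 hq.1,
    fun z hz ↦ by rw [eval_add]; exact add_mem (hp.2 z hz) (hq.2 z hz)⟩
  zero_mem' := ⟨by rw [coeff_zero]; exact zero_mem _, fun z _ ↦ by rw [eval_zero]; exact T.zero_mem⟩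
  neg_mem' {p} hp := ⟨by rw [coeff_neg]; exact neg_mem hp.1,
    fun z hz ↦ by
      have h : (-p).eval z = -p.eval z := map_neg (leval z) p
      rw [h]; exact neg_mem (hp.2 z hz)⟩

variable {T : Submodule ℤ D} {p : D[X]}

theorem map_innerAut_mem_centralCurves (hT : IsInnerInvariant T) (hp : p ∈ centralCurves T)
    (u : Dˣ) : p.map (innerAut ℤ u : D →+* D) ∈ centralCurves T := by
  have hfix (z : D) (hz : z ∈ Subring.center D) : innerAut ℤ u z = z := by
    rw [innerAut_apply, Subring.mem_center_iff.1 hz, Units.mul_inv_cancel_right]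
  refine ⟨?_, fun z hz ↦ ?_⟩
  · rw [coeff_map]
    exact (hfix _ hp.1).symm ▸ hp.1
  · have h := eval₂_at_apply (p := p) (innerAut ℤ u : D →+* D) z
    rw [eval_map, ← hfix z hz]
    exact h ▸ hT u _ (hp.2 z hz)

theorem comp_C_mul_X_mem_centralCurves (hp : p ∈ centralCurves T) {c : D}
    (hc : c ∈ Subring.center D) : p.comp (C c * X) ∈ centralCurves T := by
  refine ⟨by simpa using hp.1, fun z hz ↦ ?_⟩
  rw [eval_comp_C_mul_X p (Subring.mem_center_iff.1 hz c)]
  exact hp.2 _ (mul_mem hc hz)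

section Minimal

variable {n : ℕ} (hT : IsInnerInvariant T)
  (hmin : ∀ q ∈ centralCurves T, q.support.card < n → ∀ i, q.coeff i ∈ Subring.center D)

include hT hmin

theorem commute_coeff_of_commute_coeff (hp : p ∈ centralCurves T) (hn : p.support.card ≤ n)
    {i j : ℕ} (hj : p.coeff j ≠ 0) {u : D} (hu : Commute u (p.coeff j)) :
    Commute u (p.coeff i) := by
  rcases eq_or_ne u 0 with rfl | hu₀
  · exact .zero_left _
  rcases eq_or_ne (u + 1) 0 with hu₁ | hu₁
  · rw [eq_neg_of_add_eq_zero_left hu₁]; exact .neg_left (.one_left _)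
  have hconj {w : D} (hw₀ : w ≠ 0) (hw : Commute w (p.coeff j)) :
      w * p.coeff i * w⁻¹ - p.coeff i ∈ Subring.center D := by
    set φ : D →+* D := (innerAut ℤ (Units.mk0 w hw₀) : D →+* D)
    have hφ (k : ℕ) : (p.map φ - p).coeff k = w * p.coeff k * w⁻¹ - p.coeff k := by
      rw [coeff_sub, coeff_map]; rfl
    refine hφ i ▸ hmin _ (sub_mem (map_innerAut_mem_centralCurves hT hp _) hp) ?_ i
    refine (Finset.card_lt_card ((Finset.ssubset_iff_of_subset fun k ↦ ?_).2
      ⟨j, mem_support_iff.2 hj, ?_⟩)).trans_le hn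
    · rw [mem_support_iff, mem_support_iff, hφ]
      exact mt fun h ↦ by rw [h, mul_zero, zero_mul, sub_zero]
    · rw [notMem_support_iff, hφ, hw.eq, mul_inv_cancel_right₀ hw₀, sub_self]
  exact commute_of_conj_sub_mem_center hu₀ hu₁ (hconj hu₀ hu)
    (hconj hu₁ (hu.add_left (.one_left _)))

theorem commute_coeff_coeff (hp : p ∈ centralCurves T) (hn : p.support.card ≤ n) (i j : ℕ) :
    Commute (p.coeff i) (p.coeff j) := by
  by_cases hj : p.coeff j = 0
  · exact hj ▸ .zero_right _
  · exact (commute_coeff_of_commute_coeff hT hmin hp hn hj (Commute.refl _)).symm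

theorem mem_center_or_mem_center_of_ne [Infinite (Subring.center D)] (hp : p ∈ centralCurves T)
    (hn : p.support.card ≤ n) {i j : ℕ} (hij : i ≠ j) :
    p.coeff i ∈ Subring.center D ∨ p.coeff j ∈ Subring.center D := by
  refine mem_center_or_mem_center_of_commute_conj fun u ↦ ?_
  set φ : D →+* D := (innerAut ℤ u : D →+* D)
  set x := p.coeff i
  set y := p.coeff j
  have hxy : ⁅x, y⁆ = 0 := commute_iff_lie_eq.1 (commute_coeff_coeff hT hmin hp hn i j)
  have hφxy : ⁅φ x, φ y⁆ = 0 :=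
    commute_iff_lie_eq.1 ((commute_coeff_coeff hT hmin hp hn i j).map φ)
  have twisted (c : Subring.center D) : c ^ j • ⁅x, φ y⁆ + c ^ i • ⁅φ x, y⁆ = 0 := by
    set q := p + (p.map φ).comp (C (c : D) * X) with hq
    have hcoeff (k : ℕ) : q.coeff k = p.coeff k + c ^ k • φ (p.coeff k) := by
      rw [hq, coeff_add, comp_C_mul_X_coeff, coeff_map, Subring.smul_def, smul_eq_mul,
        Subring.coe_pow, Subring.mem_center_iff.1 (pow_mem c.2 k)]
    have hq_mem : q ∈ centralCurves T :=
      add_mem hp (comp_C_mul_X_mem_centralCurves (map_innerAut_mem_centralCurves hT hp u) c.2)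
    have hsupp : q.support ⊆ p.support := fun k ↦ by
      rw [mem_support_iff, mem_support_iff, hcoeff]
      exact mt fun h ↦ by rw [h, map_zero, smul_zero, add_zero]
    have := commute_iff_lie_eq.1
      (commute_coeff_coeff hT hmin hq_mem ((Finset.card_le_card hsupp).trans hn) i j)
    rw [hcoeff, hcoeff] at this
    simpa [x, y, hxy, hφxy, add_comm] using this
  have hneg : ⁅φ x, y⁆ = -⁅x, φ y⁆ := eq_neg_of_add_eq_zero_right (by simpa using twisted 1)
  obtain ⟨c, hc⟩ := exists_pow_ne_pow (Subring.center D) hij.symm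
  have hsmul : (c ^ j - c ^ i) • ⁅x, φ y⁆ = 0 := by
    rw [sub_smul, sub_eq_add_neg, ← smul_neg, ← hneg, twisted]
  exact commute_iff_lie_eq.2 ((smul_eq_zero.1 hsmul).resolve_left (sub_ne_zero.2 hc))

end Minimal

theorem exists_pow_smul_mem_of_mem_centralCurves [Infinite (Subring.center D)]
    (hT : IsInnerInvariant T) (hp : p ∈ centralCurves T)
    (hpc : ∃ i, p.coeff i ∉ Subring.center D) :
    ∃ m > 0, ∃ v ∉ Subring.center D, ∀ z : Subring.center D, z ^ m • v ∈ T := by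
  let noncentral : Set D[X] := {q | q ∈ centralCurves T ∧ ∃ i, q.coeff i ∉ Subring.center D}
  obtain ⟨q, ⟨hq, i, hi⟩, hq_min⟩ :=
    (measure fun q : D[X] ↦ q.support.card).wf.has_min noncentral ⟨p, hp, hpc⟩
  have hmin (r : D[X]) (hr : r ∈ centralCurves T) (hlt : r.support.card < q.support.card) (k : ℕ) :
      r.coeff k ∈ Subring.center D := by
    by_contra hk
    exact hq_min r ⟨hr, k, hk⟩ hlt
  have hmonomial : q = monomial i (q.coeff i) := by
    ext j
    rw [coeff_monomial]
    split_ifs with hij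
    · rw [hij]
    have hj : q.coeff j ∈ Subring.center D :=
      (mem_center_or_mem_center_of_ne hT hmin hq le_rfl hij).resolve_left hi
    by_contra hj₀
    exact hi (Subring.mem_center_iff.2 fun u ↦ commute_coeff_of_commute_coeff hT hmin hq le_rfl hj₀
      (Subring.mem_center_iff.1 hj u))
  refine ⟨i, Nat.pos_of_ne_zero fun h ↦ hi (h ▸ hq.1), q.coeff i, hi, fun z ↦ ?_⟩
  have hz := hq.2 z z.2
  rw [hmonomial, eval_monomial] at hz
  rwa [Subring.smul_def, smul_eq_mul, Subring.coe_pow, ← Subring.mem_center_iff.1 (pow_mem z.2 i)]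

end CentralCurves

section MapValues

variable {F X A B : Type*} [CommRing F] [Ring A] [Ring B] [Algebra F A] [Algebra F B]

theorem map_freeAlgebra_lift (φ : A →ₐ[F] B) (a : X → A) (f : FreeAlgebra F X) :
    φ (FreeAlgebra.lift F a f) = FreeAlgebra.lift F (φ ∘ a) f := by
  have h : φ.comp (FreeAlgebra.lift F a) = FreeAlgebra.lift F (φ ∘ a) := by ext; simp
  exact DFunLike.congr_fun h f

theorem map_valueSpan {φ : A →ₐ[F] B} (hφ : Function.Surjective φ) (f : FreeAlgebra F X) :
    (valueSpan A f).map φ.toRingHom.toIntAlgHom.toLinearMap = valueSpan B f := by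
  rw [valueSpan, Submodule.map_span, ← Set.range_comp, valueSpan,
    ← (hφ.comp_left (α := X)).range_comp]
  exact congrArg (Submodule.span ℤ <| Set.range ·) (funext fun a ↦ map_freeAlgebra_lift φ a f)

theorem map_valueSpan_mul_self {φ : A →ₐ[F] B} (hφ : Function.Surjective φ)
    (f : FreeAlgebra F X) :
    (valueSpan A f * valueSpan A f).map φ.toRingHom.toIntAlgHom.toLinearMap =
      valueSpan B f * valueSpan B f := by
  rw [Submodule.map_mul, map_valueSpan hφ]

theorem isInnerInvariant_valueSpan (f : FreeAlgebra F X) : IsInnerInvariant (valueSpan A f) :=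
  fun u t ht ↦ map_valueSpan (φ := (innerAut F u : A →ₐ[F] A)) (innerAut F u).surjective f ▸
    ⟨t, ht, rfl⟩

end MapValues

section DivisionRings

open Polynomial

variable {F X : Type*} [Field F]

variable {D : Type*} [DivisionRing D] [Algebra F D]

theorem eval_lift_C_mul_X (f : FreeAlgebra F X) (a : X → D) {z : D} (hz : z ∈ Subring.center D) :
    (FreeAlgebra.lift F (fun i ↦ C (a i) * Polynomial.X) f).eval z =
      FreeAlgebra.lift F (fun i ↦ a i * z) f := by
  set φ : D[X] →ₐ[F] D := eval₂AlgHom (AlgHom.id F D) z (Subring.mem_center_iff.1 hz)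
  have hφ (p : D[X]) : φ p = p.eval z := rfl
  rw [← hφ, map_freeAlgebra_lift]
  exact congrArg (FreeAlgebra.lift F · f) (funext fun i ↦ by simp [hφ])

theorem lift_C_mul_X_mem_centralCurves (f : FreeAlgebra F X) (a : X → D) :
    FreeAlgebra.lift F (fun i ↦ C (a i) * Polynomial.X) f ∈ centralCurves (valueSpan D f) := by
  refine ⟨?_, fun z hz ↦ eval_lift_C_mul_X f a hz ▸ lift_mem_valueSpan f _⟩
  have h₀ : FreeAlgebra.lift F (fun i ↦ a i * 0) f =
      algebraMap F D (FreeAlgebra.lift F (0 : X → F) f) := by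
    have h := map_freeAlgebra_lift (Algebra.ofId F D) (0 : X → F) f
    simpa [Algebra.ofId_apply, Function.comp_def] using h.symm
  rw [coeff_zero_eq_eval_zero, eval_lift_C_mul_X f a (zero_mem _), h₀]
  exact Subring.mem_center_iff.2 fun x ↦ (Algebra.commutes _ x).symm

theorem exists_pow_smul_mem_valueSpan [Infinite (Subring.center D)] {f : FreeAlgebra F X}
    {a : X → D} (ha : FreeAlgebra.lift F a f ∉ Subring.center D) :
    ∃ m > 0, ∃ v ∉ Subring.center D, ∀ z : Subring.center D, z ^ m • v ∈ valueSpan D f := by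
  refine exists_pow_smul_mem_of_mem_centralCurves (isInnerInvariant_valueSpan f)
    (lift_C_mul_X_mem_centralCurves f a) ?_
  by_contra! h
  refine ha ?_
  have h₁ := eval_lift_C_mul_X f a (one_mem _)
  simp only [mul_one] at h₁
  rw [← h₁, eval_eq_sum]
  exact sum_mem fun i _ ↦ mul_mem (h i) (pow_mem (one_mem _) _)

theorem valueSpan_mul_self_eq_top_of_divisionRing {f : FreeAlgebra F X} {a : X → D}
    (ha : FreeAlgebra.lift F a f ∉ Subring.center D) : valueSpan D f * valueSpan D f = ⊤ := by
  obtain ⟨x, hx⟩ : ∃ x, ¬Commute (FreeAlgebra.lift F a f) x := by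
    by_contra! h
    exact ha (Subring.mem_center_iff.2 fun x ↦ (h x).symm.eq)
  obtain ⟨d, c, hd, hc, hmem⟩ := exists_forall_permPolynomial_mem_valueSpan hx
  by_cases hcomm : HasCommutingValues c D
  · have : Algebra.IsAlgebraic (Subring.center D) D := ⟨hcomm.isAlgebraic_center hd hc⟩
    rcases finite_or_infinite (Subring.center D)
    · exact absurd (commute_of_isAlgebraic_of_finite (k := Subring.center D) _ x) hx
    · obtain ⟨m, hm, v, hv, hvT⟩ := exists_pow_smul_mem_valueSpan ha
      exact (isInnerInvariant_valueSpan f).mul_self_eq_top_of_pow_smul_mem hm hv hvT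
  · exact mul_self_eq_top_of_not_hasCommutingValues hcomm hmem

end DivisionRings

section InnerInvariantMatrices

open Matrix

namespace IsInnerInvariant

-- Apply, in succession, `t ↦ u t u⁻¹ - t`, then `s ↦ n s - s n - n s n`, then `s ↦ u s u⁻¹ - s`,
-- where `u = 1 + (l - 1) e`.
theorem smul_mul_mul_mem {F A : Type*} [Field F] [Ring A] [Algebra F A] {T : Submodule ℤ A}
    (hT : IsInnerInvariant T) {e n t : A} (he : e * e = e) (hen : e * n = n) (hne : n * e = 0)
    {l : F} (hl : l ≠ 0) (ht : t ∈ T) : ((l - 1) * (l⁻¹ - 1)) • (n * t * n) ∈ T := by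
  obtain ⟨a, b, ha, hb⟩ : ∃ a b, a = l - 1 ∧ b = l⁻¹ - 1 := ⟨_, _, rfl, rfl⟩
  have hab : a * b = -a - b := by subst ha hb; field_simp; ring
  have hn : n * n = 0 := by rw [← hen, mul_assoc, ← mul_assoc n, hne, zero_mul, mul_zero]
  have hen' (x : A) : e * (n * x) = n * x := by rw [← mul_assoc, hen]
  have hne' (x : A) : n * (e * x) = 0 := by rw [← mul_assoc, hne, zero_mul]
  have he' (x : A) : e * (e * x) = e * x := by rw [← mul_assoc, he]
  have hinv : (1 + a • e) * (1 + b • e) = 1 ∧ (1 + b • e) * (1 + a • e) = 1 := by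
    constructor <;> simp only [mul_add, add_mul, smul_mul_assoc, mul_smul_comm, one_mul, mul_one,
      he] <;> match_scalars <;> grind
  let u : Aˣ := ⟨1 + a • e, 1 + b • e, hinv.1, hinv.2⟩
  have hu {x : A} (hx : x ∈ T) : a • (e * x) + b • (x * e) + (a * b) • (e * x * e) ∈ T := by
    have h : a • (e * x) + b • (x * e) + (a * b) • (e * x * e) =
        (1 + a • e) * x * (1 + b • e) - x := by
      simp only [mul_add, add_mul, smul_mul_assoc, mul_smul_comm, one_mul, mul_one]
      module
    exact h ▸ sub_mem (hT u x hx) hx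
  have hs : b • (n * t * e - t * n + e * t * n - n * t * n) ∈ T := by
    convert hT.mul_sub_mul_sub_mul_mul_mem hn (hu ht) using 1
    simp only [mul_add, add_mul, smul_mul_assoc, mul_smul_comm, mul_assoc, hen, hne', zero_mul]
    match_scalars <;> grind
  convert neg_mem (hu hs) using 1
  simp only [← ha, ← hb, mul_add, mul_sub, add_mul, sub_mul, smul_mul_assoc, mul_smul_comm,
    mul_assoc, hen', hne, he, he', mul_zero]
  match_scalars <;> grind

section Ring

variable {ι A : Type*} [Fintype ι] [DecidableEq ι] [Ring A] {T : Submodule ℤ (Matrix ι ι A)}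
  {i j k : ι}

theorem single_mem_of_single_mem_col (hT : IsInnerInvariant T) (hkj : k ≠ j) {c : A}
    (h : single i j c ∈ T) : single k j c ∈ T := by
  obtain rfl | hki := eq_or_ne k i
  · exact h
  · simpa [hkj.symm, hki.symm] using
      hT.mul_sub_mul_sub_mul_mul_mem (n := single k i 1) (by simp [hki.symm]) h

theorem single_mem_of_single_mem_row (hT : IsInnerInvariant T) (hki : k ≠ i) {c : A}
    (h : single i j c ∈ T) : single i k c ∈ T := by
  obtain rfl | hjk := eq_or_ne j k
  · exact h
  · simpa [hki, hjk.symm] using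
      hT.mul_sub_mul_sub_mul_mul_mem (n := single j k 1) (by simp [hjk.symm]) h

theorem mul_self_eq_top_of_single_mem [Nontrivial ι] (hT : IsInnerInvariant T)
    (h : ∀ i j, i ≠ j → ∀ c, single i j c ∈ T) : T * T = ⊤ := by
  have hmem (i j : ι) (c : A) : single i j c ∈ T * T := by
    obtain rfl | hij := eq_or_ne i j
    · obtain ⟨k, hk⟩ := exists_ne i
      simpa using Submodule.mul_mem_mul (h i k hk.symm c) (h k i hk 1)
    · have hdiag : single j j 1 - single i i 1 ∈ T := by
        simpa using add_mem (hT.mul_sub_mul_sub_mul_mul_mem (n := single j i 1)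
          (by simp [hij]) (h i j hij 1)) (h j i hij.symm 1)
      simpa [mul_sub, hij.symm] using Submodule.mul_mem_mul (h i j hij c) hdiag
  refine eq_top_iff.2 fun s _ ↦ ?_
  rw [matrix_eq_sum_single s]
  exact sum_mem fun i _ ↦ sum_mem fun j _ ↦ hmem i j _

theorem exists_apply_ne_zero_of_not_commute [Nontrivial ι] (hT : IsInnerInvariant T)
    {t s : Matrix ι ι A} (ht : t ∈ T) (hts : ¬Commute t s) : ∃ t ∈ T, ∃ i j, i ≠ j ∧ t j i ≠ 0 := by
  by_contra! h
  refine hts ?_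
  have hdiag : t = diagonal fun i ↦ t i i := by
    ext i j
    obtain rfl | hij := eq_or_ne i j
    · simp
    · simp [hij, h t ht j i hij.symm]
  have hcomm {i j : ι} (hij : i ≠ j) (x : A) : x * t j j = t i i * x := by
    have hoff := h _ (hT.mul_sub_mul_sub_mul_mul_mem (n := single i j x)
      (by simp [hij.symm]) ht) j i hij.symm
    simpa [h t ht i j hij, sub_eq_zero] using hoff
  have hcomm' (i j : ι) (x : A) : x * t j j = t i i * x := by
    obtain rfl | hij := eq_or_ne i j
    · obtain ⟨k, hk⟩ := exists_ne i
      have hki : t i i = t k k := by simpa using hcomm hk 1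
      rw [hcomm hk, hki]
    · exact hcomm hij x
  rw [hdiag]
  ext i j
  simp [hcomm' i j]

end Ring

section DivisionRing

variable {ι D : Type*} [Fintype ι] [DecidableEq ι] [DivisionRing D]
  {T : Submodule ℤ (Matrix ι ι D)} {i j : ι}

theorem single_mem_of_single_mem (hT : IsInnerInvariant T) (hij : i ≠ j) {r : D} (hr : r ≠ 0)
    (h : single i j r ∈ T) (c : D) : single i j c ∈ T := by
  obtain rfl | hc := eq_or_ne c 0
  · simp
  have hw : c * r⁻¹ ≠ 0 := mul_ne_zero hc (inv_ne_zero hr)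
  have hinv {x y : D} (hxy : x * y = 1) :
      diagonal (Pi.mulSingle i x) * diagonal (Pi.mulSingle i y) = (1 : Matrix ι ι D) := by
    rw [diagonal_mul_diagonal, ← Pi.mul_def, ← Pi.mulSingle_mul, hxy, Pi.mulSingle_one,
      diagonal_one']
  let u : (Matrix ι ι D)ˣ := ⟨diagonal (Pi.mulSingle i (c * r⁻¹)),
    diagonal (Pi.mulSingle i (c * r⁻¹)⁻¹), hinv (mul_inv_cancel₀ hw), hinv (inv_mul_cancel₀ hw)⟩
  have hu : u.val * single i j r * u⁻¹.val = single i j c := by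
    ext a b
    simp only [u, Units.inv_mk, mul_diagonal, diagonal_mul, single_apply, mul_ite, ite_mul,
      mul_zero, zero_mul]
    refine ite_congr rfl (fun ⟨ha, hb⟩ ↦ ?_) fun _ ↦ rfl
    subst ha hb
    simp [Pi.mulSingle_eq_of_ne hij.symm, hr]
  exact hu ▸ hT u _ h

variable {F : Type*} [Field F] [Algebra F D] {l : F}

theorem single_mem_of_apply_ne_zero (hT : IsInnerInvariant T) (hl₀ : l ≠ 0) (hl₁ : l ≠ 1)
    {t : Matrix ι ι D} (ht : t ∈ T) (hij : i ≠ j) (htji : t j i ≠ 0) (c : D) :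
    single i j c ∈ T := by
  have hmem := hT.smul_mul_mul_mem (e := single i i 1) (n := single i j 1) (by simp) (by simp)
    (by simp [hij.symm]) hl₀ ht
  rw [single_mul_mul_single, smul_single, one_mul, mul_one] at hmem
  refine hT.single_mem_of_single_mem hij (smul_ne_zero (mul_ne_zero ?_ ?_) htji) hmem c
  · exact sub_ne_zero.2 hl₁
  · exact sub_ne_zero.2 (inv_ne_one.2 hl₁)

theorem mul_self_eq_top_of_not_commute [Nontrivial ι] (hT : IsInnerInvariant T) (hl₀ : l ≠ 0)
    (hl₁ : l ≠ 1) {t s : Matrix ι ι D} (ht : t ∈ T) (hts : ¬Commute t s) : T * T = ⊤ := by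
  obtain ⟨t, ht, i, j, hij, htji⟩ := hT.exists_apply_ne_zero_of_not_commute ht hts
  have hsingle := hT.single_mem_of_apply_ne_zero hl₀ hl₁ ht hij htji
  refine hT.mul_self_eq_top_of_single_mem fun a b hab c ↦ ?_
  obtain rfl | haj := eq_or_ne a j
  · have hswap := hT.single_mem_of_apply_ne_zero hl₀ hl₁ (hsingle 1) hij.symm (by simp) c
    exact hT.single_mem_of_single_mem_row hab.symm hswap
  · exact hT.single_mem_of_single_mem_row hab.symm
      (hT.single_mem_of_single_mem_col haj (hsingle c))

end DivisionRing

end IsInnerInvariant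

end InnerInvariantMatrices

section SimpleRings

variable {F X : Type*} [Field F]

theorem valueSpan_mul_self_eq_top_of_surjective {A B : Type*} [Ring A] [Ring B] [Algebra F A]
    [Algebra F B] {φ : A →ₐ[F] B} (hφ : Function.Surjective φ) {f : FreeAlgebra F X} {b : X → B}
    {y : B} (hy : ¬Commute (FreeAlgebra.lift F b f) y)
    (h : ∀ (a : X → A) (x : A), ¬Commute (FreeAlgebra.lift F a f) x →
      valueSpan A f * valueSpan A f = ⊤) :
    valueSpan B f * valueSpan B f = ⊤ := by
  obtain ⟨a, rfl⟩ := hφ.comp_left b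
  obtain ⟨x, rfl⟩ := hφ y
  rw [← map_freeAlgebra_lift] at hy
  rw [← map_valueSpan_mul_self hφ, h a x fun hax ↦ hy (hax.map φ), Submodule.map_top]
  exact LinearMap.range_eq_top.2 hφ

theorem valueSpan_mul_self_eq_top_of_matrix (hF : 2 < Cardinal.mk F) {D : Type*} [DivisionRing D]
    [Algebra F D] {n : ℕ} [NeZero n] {f : FreeAlgebra F X} {a : X → Matrix (Fin n) (Fin n) D}
    {x : Matrix (Fin n) (Fin n) D} (hx : ¬Commute (FreeAlgebra.lift F a f) x) :
    valueSpan (Matrix (Fin n) (Fin n) D) f * valueSpan (Matrix (Fin n) (Fin n) D) f = ⊤ := by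
  obtain rfl | hn := eq_or_ne n 1
  · have hscalar : Function.Surjective (Matrix.scalarAlgHom (Fin 1) F (α := D)) := fun A ↦
      ⟨A 0 0, by ext i j; simp [Subsingleton.elim i 0, Subsingleton.elim j 0]⟩
    exact valueSpan_mul_self_eq_top_of_surjective hscalar hx fun d y hdy ↦
      valueSpan_mul_self_eq_top_of_divisionRing fun hd ↦ hdy (Subring.mem_center_iff.1 hd y).symm
  · have : Nontrivial (Fin n) := Fin.nontrivial_iff_two_le.2 (by have := NeZero.pos n; omega)
    obtain ⟨l, hl⟩ := Cardinal.exists_notMem_of_length_lt [(0 : F), 1] (by simpa using hF)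
    simp only [List.mem_cons, List.not_mem_nil, or_false, not_or] at hl
    exact (isInnerInvariant_valueSpan f).mul_self_eq_top_of_not_commute hl.1 hl.2
      (lift_mem_valueSpan f a) hx

theorem valueSpan_mul_self_eq_top_of_isSimpleRing (hF : 2 < Cardinal.mk F) {S : Type*} [Ring S]
    [IsSimpleRing S] [Algebra F S] {f : FreeAlgebra F X} {a : X → S} {x : S}
    (hx : ¬Commute (FreeAlgebra.lift F a f) x) : valueSpan S f * valueSpan S f = ⊤ := by
  obtain ⟨d, c, hd, hc, hmem⟩ := exists_forall_permPolynomial_mem_valueSpan hx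
  by_cases hcomm : HasCommutingValues c S
  · have := hcomm.isArtinianRing hd hc
    obtain ⟨n, _, D, _, _, ⟨e⟩⟩ := IsSimpleRing.exists_algEquiv_matrix_divisionRing F S
    let φ : Matrix (Fin n) (Fin n) D →ₐ[F] S := e.symm
    exact valueSpan_mul_self_eq_top_of_surjective (φ := φ) e.symm.surjective hx
      fun _ _ ↦ valueSpan_mul_self_eq_top_of_matrix hF
  · exact mul_self_eq_top_of_not_hasCommutingValues hcomm hmem

end SimpleRings

section MaximalIdeals

variable {R : Type*} [Ring R] {M : TwoSidedIdeal R}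

theorem ringCon_mk'_eq_zero_iff {x : R} : M.ringCon.mk' x = 0 ↔ x ∈ M := by
  rw [← TwoSidedIdeal.mem_ker, TwoSidedIdeal.ker_ringCon_mk']

theorem isSimpleRing_ringCon_quotient (hM : IsCoatom M) : IsSimpleRing M.ringCon.Quotient := by
  have : IsSimpleOrder (Set.Ici M.ringCon) := Set.isSimpleOrder_Ici_iff_isCoatom.2
    ((TwoSidedIdeal.orderIsoRingCon.isCoatom_iff M).2 hM)
  exact ⟨(TwoSidedIdeal.orderIsoRingCon.trans RingCon.correspondence.symm).isSimpleOrder⟩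

theorem exists_not_commute_of_span_commutators_eq_top {V : Set R}
    (hV : TwoSidedIdeal.span {x : R | ∃ v ∈ V, ∃ r, x = v * r - r * v} = ⊤) (hM : M ≠ ⊤) :
    ∃ v ∈ V, ∃ r, ¬Commute (M.ringCon.mk' v) (M.ringCon.mk' r) := by
  by_contra! h
  refine hM (eq_top_iff.2 (hV ▸ TwoSidedIdeal.span_le.2 ?_))
  rintro _ ⟨v, hv, r, rfl⟩
  rw [SetLike.mem_coe, ← ringCon_mk'_eq_zero_iff, map_sub, map_mul, map_mul, h v hv r, sub_self]

end MaximalIdeals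

theorem closure_products_eq_valueSpan {F X R : Type*} [CommRing F] [Ring R] [Algebra F R]
    (f : FreeAlgebra F X) :
    AddSubgroup.closure
      {y : R | ∃ a b : X → R, y = FreeAlgebra.lift F a f * FreeAlgebra.lift F b f} =
      (valueSpan R f * valueSpan R f).toAddSubgroup := by
  rw [valueSpan, Submodule.span_mul_span, Submodule.span_int_eq_addSubgroupClosure]
  congr 1
  ext y
  simp [Set.mem_mul, eq_comm]

/-- Let `F` be a field with more than two elements, `R` a unital
`F`-algebra, and `f ∈ F⟨X⟩` such that `f(R)` is fully noncentral (the two-sided ideal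
generated by commutators of values of `f` with elements of `R` is all of `R`). Then for
every maximal two-sided ideal `M` of `R`, every element of `R` is a sum `s + m` with `s`
in the additive subgroup generated by products of two values of `f` and `m ∈ M`. -/
theorem stmt_1 (F : Type*) [Field F] (hF : 2 < Cardinal.mk F)
    (R : Type*) [Ring R] [Algebra F R] (f : FreeAlgebra F ℕ)
    (hf : TwoSidedIdeal.span
        {x : R | ∃ (a : ℕ → R) (r : R),
          x = FreeAlgebra.lift F a f * r - r * FreeAlgebra.lift F a f} = ⊤)
    (M : TwoSidedIdeal R) (hM : IsCoatom M) :
    ∀ x : R, ∃ s ∈ AddSubgroup.closure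
        {y : R | ∃ a b : ℕ → R,
          y = FreeAlgebra.lift F a f * FreeAlgebra.lift F b f},
      ∃ m ∈ M, x = s + m := by
  intro x
  have := isSimpleRing_ringCon_quotient hM
  let φ : R →ₐ[F] M.ringCon.Quotient := RingCon.mkₐ F M.ringCon
  have hφ : Function.Surjective φ := RingCon.mk'_surjective M.ringCon
  obtain ⟨_, ⟨a, rfl⟩, r, har⟩ := exists_not_commute_of_span_commutators_eq_top
    (V := Set.range (FreeAlgebra.lift F · f)) (by simpa using hf) hM.1
  have hmem : φ x ∈ valueSpan M.ringCon.Quotient f * valueSpan M.ringCon.Quotient f := by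
    rw [valueSpan_mul_self_eq_top_of_isSimpleRing hF (map_freeAlgebra_lift φ a f ▸ har)]
    trivial
  rw [← map_valueSpan_mul_self hφ] at hmem
  obtain ⟨s, hs, hsx⟩ := hmem
  refine ⟨s, by rwa [closure_products_eq_valueSpan], x - s, ?_, (add_sub_cancel s x).symm⟩
  exact ringCon_mk'_eq_zero_iff.1 ((map_sub φ x s).trans (sub_eq_zero.2 hsx.symm))
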